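/- arXiv:1902.05195 — 10 statements merged into one kernel-verified Lean document; each statement's English description precedes it below -/
import Mathlib

section
/- Let p ≥ 5 be a prime and let A be a nonempty subset of 𝔽_p with A = −A and with |A \ {0}| ≤ 2·log₃(p). Then A has a unique difference, i.e., there exists x ∈ 𝔽_p such that exactly one ordered pair (a,b) ∈ A × A satisfies a − b = x. -/
open Finset Pointwise

/-- A nonempty subset `A` of `𝔽_p` has a unique difference if there is `x ∈ 𝔽_p`
represented exactly once as an ordered difference `a - b` with `a, b ∈ A`. -/
def HasUniqueDifference {p : ℕ} (A : Finset (ZMod p)) : Prop :=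
  ∃ x : ZMod p, ((A ×ˢ A).filter fun ab => ab.1 - ab.2 = x).card = 1

namespace UD

/-- Trace bound for the determinant. -/
lemma det_sq_le {ι : Type*} [Fintype ι] [DecidableEq ι] [Nonempty ι] (B : Matrix ι ι ℝ)
    (h : ∀ i, ∑ j, B i j ^ 2 ≤ 8) : B.det ^ 2 ≤ 8 ^ Fintype.card ι := by
  have hps : (B * B.conjTranspose).PosSemidef := Matrix.posSemidef_self_mul_conjTranspose B
  have hH := hps.isHermitian
  have hdet : (B * B.conjTranspose).det = B.det ^ 2 := by
    rw [Matrix.det_mul, Matrix.det_conjTranspose]; simp [sq]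
  have h1 : (B * B.conjTranspose).det = ∏ i, hH.eigenvalues i := by
    simpa using hH.det_eq_prod_eigenvalues
  have h2 : (B * B.conjTranspose).trace = ∑ i, hH.eigenvalues i := by
    simpa using hH.trace_eq_sum_eigenvalues
  have h3 : (B * B.conjTranspose).trace ≤ 8 * Fintype.card ι := by
    have : (B * B.conjTranspose).trace = ∑ i, ∑ j, B i j ^ 2 := by
      simp [Matrix.trace, Matrix.mul_apply, sq]
    rw [this]
    calc _ ≤ ∑ i : ι, (8:ℝ) := Finset.sum_le_sum fun i _ => h i
      _ = _ := by simp [mul_comm]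
  have hn : (0:ℝ) < Fintype.card ι := by exact_mod_cast Fintype.card_pos
  have amgm := Real.geom_mean_le_arith_mean_weighted (Finset.univ : Finset ι)
    (fun _ => (Fintype.card ι : ℝ)⁻¹) hH.eigenvalues (fun _ _ => by positivity)
    (by simp) (fun i _ => hps.eigenvalues_nonneg i)
  rw [Real.finsetProd_rpow _ _ (fun i _ => hps.eigenvalues_nonneg i), ← Finset.mul_sum,
    ← h2, ← h1, hdet] at amgm
  have h4 : (B.det ^ 2) ^ ((Fintype.card ι : ℝ)⁻¹) ≤ 8 := by
    refine amgm.trans ?_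
    rw [inv_mul_le_iff₀ hn]; linarith
  have h5 := pow_le_pow_left₀ (by positivity) h4 (Fintype.card ι)
  rwa [Real.rpow_inv_natCast_pow (by positivity) Fintype.card_ne_zero] at h5

lemma core {ι : Type*} [Fintype ι] [DecidableEq ι] (p : ℕ) [Fact p.Prime]
    (B : Matrix ι ι ℝ) (M : Matrix ι ι ℤ) (k : ι → ℕ)
    (hM : ∀ i j, (M i j : ℝ) = B i j * 3 ^ k j) (hB : ∀ i, ∑ j, B i j ^ 2 ≤ 8)
    (v : ι → ZMod p) (hv : v ≠ 0) (hMv : ∀ i, ∑ j, (M i j : ZMod p) * v j = 0)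
    (hp : 3 ^ (∑ j, (k j + 1)) ≤ p) :
    ∃ z : ι → ℝ, z ≠ 0 ∧ ∀ i, ∑ j, B i j * z j = 0 := by
  obtain ⟨i0, hi0⟩ := Function.ne_iff.1 hv
  have : Nonempty ι := ⟨i0⟩
  suffices hd : B.det = 0 by
    obtain ⟨z, hz, hz'⟩ := Matrix.exists_mulVec_eq_zero_iff.2 hd
    exact ⟨z, hz, fun i => congrFun hz' i⟩
  have hdiv : (M.det : ZMod p) = 0 := by
    have : (M.map (Int.castRingHom (ZMod p))).det = 0 := by
      apply Matrix.exists_mulVec_eq_zero_iff.1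
      exact ⟨v, hv, funext fun i => hMv i⟩
    rw [← RingHom.mapMatrix_apply, ← RingHom.map_det] at this
    simpa using this
  rw [ZMod.intCast_zmod_eq_zero_iff_dvd] at hdiv
  have hdet : (M.det : ℝ) = B.det * ∏ j, 3 ^ k j := by
    have h1 : M.map (Int.castRingHom ℝ) = B * Matrix.diagonal (fun j => 3 ^ k j) := by
      ext i j; simp [hM]
    have h2 : (M.det : ℝ) = (M.map (Int.castRingHom ℝ)).det := by
      rw [← RingHom.mapMatrix_apply, ← RingHom.map_det]; simp
    rw [h2, h1, Matrix.det_mul, Matrix.det_diagonal]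
  have hlt : |M.det| < p := by
    have h8 : |B.det| < 3 ^ Fintype.card ι := by
      apply abs_lt_of_sq_lt_sq _ (by positivity)
      calc _ ≤ _ := det_sq_le B hB
        _ < (9:ℝ) ^ Fintype.card ι := by
          apply pow_lt_pow_left₀ (by norm_num) (by norm_num) Fintype.card_ne_zero
        _ = _ := by rw [← pow_mul, mul_comm, pow_mul]; norm_num
    have : (|M.det| : ℝ) < (p : ℝ) := by
      rw [hdet, abs_mul, abs_of_pos (a := ∏ j, (3:ℝ) ^ k j) (by positivity)]
      calc _ < 3 ^ Fintype.card ι * ∏ j, (3:ℝ) ^ k j := by gcongr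
        _ = ((3 ^ (∑ j, (k j + 1)) : ℕ) : ℝ) := by
          push_cast
          rw [Finset.sum_add_distrib, pow_add, Finset.prod_pow_eq_pow_sum]; simp [mul_comm]
        _ ≤ p := by exact_mod_cast hp
    exact_mod_cast this
  have h0 : M.det = 0 := Int.eq_zero_of_abs_lt_dvd hdiv hlt
  rw [h0] at hdet
  have : (∏ j, (3:ℝ) ^ k j) ≠ 0 := by positivity
  simpa [this] using hdet.symm

lemma row_bound {T : Type*} [DecidableEq T] (N : Finset T) (c β δ : T) (α γ : ℝ)
    (hα : |α| ≤ 1) (hγ : |γ| ≤ 1) (h1 : β = c → |α| ≤ 1/3) (h2 : δ = c → |γ| ≤ 1/3) :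
    ∑ e ∈ N, ((if c = e then 2 else 0) - (if β = e then α else 0) -
      (if δ = e then γ else 0) : ℝ) ^ 2 ≤ 8 := by
  have hsub : ∑ e ∈ N, ((if c = e then 2 else 0) - (if β = e then α else 0) -
      (if δ = e then γ else 0) : ℝ) ^ 2 ≤ ∑ e ∈ ({c, β, δ} : Finset T),
      ((if c = e then 2 else 0) - (if β = e then α else 0) -
      (if δ = e then γ else 0) : ℝ) ^ 2 := by
    rw [← Finset.sum_filter_add_sum_filter_not N (fun e => e ∈ ({c, β, δ} : Finset T))]
    rw [Finset.sum_eq_zero (s := N.filter (fun e => ¬ e ∈ ({c, β, δ} : Finset T)))]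
    · rw [add_zero]
      apply Finset.sum_le_sum_of_subset_of_nonneg
      · intro e; simp only [Finset.mem_filter]; tauto
      · intros; positivity
    · intro e he
      simp only [Finset.mem_filter, Finset.mem_insert, Finset.mem_singleton, not_or] at he
      rw [if_neg (fun h => he.2.1 h.symm), if_neg (fun h => he.2.2.1 h.symm),
        if_neg (fun h => he.2.2.2 h.symm)]
      norm_num
  refine hsub.trans ?_
  rw [abs_le] at hα hγ
  by_cases hb : β = c
  · have h1' := abs_le.1 (h1 hb)
    by_cases hd : δ = c
    · have h2' := abs_le.1 (h2 hd)
      subst hb; subst hd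
      simp
      nlinarith
    · subst hb
      have hd' : ¬ β = δ := fun h => hd h.symm
      simp [Finset.sum_pair hd', hd, hd']
      nlinarith
  · have hb' : ¬ c = β := fun h => hb h.symm
    by_cases hd : δ = c
    · have h2' := abs_le.1 (h2 hd)
      subst hd
      have e : ({δ, β, δ} : Finset T) = {δ, β} := by ext; simp; tauto
      rw [e, Finset.sum_pair hb']
      simp [hb, hb']
      nlinarith
    · have hd' : ¬ c = δ := fun h => hd h.symm
      by_cases hbd : β = δ
      · subst hbd
        simp [Finset.sum_pair hb', hb, hb']
        nlinarith
      · have hbd' : ¬ δ = β := fun h => hbd h.symm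
        rw [Finset.sum_insert (by simp [hb', hd']), Finset.sum_pair hbd]
        simp [hb, hb', hd, hd', hbd, hbd']
        nlinarith

lemma balanced (p : ℕ) [Fact p.Prime] (n : ℕ) : ∀ S : Finset (ZMod p), S.card ≤ n →
    S.Nonempty → (∀ a ∈ S, ∃ b ∈ S, ∃ d ∈ S, b ≠ a ∧ b + d = 2 * a) → p < 3 ^ S.card := by
  induction n with
  | zero => intro S hS hne; have := hne.card_pos; omega
  | succ n ih =>
  intro S hS hne hbal
  by_contra hcon
  push Not at hcon
  have hbal' : ∀ a : ZMod p, ∃ b d : ZMod p, a ∈ S → b ∈ S ∧ d ∈ S ∧ b ≠ a ∧ b + d = 2 * a := by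
    intro a
    by_cases ha : a ∈ S
    · obtain ⟨b, hb, d, hd, h⟩ := hbal a ha
      exact ⟨b, d, fun _ => ⟨hb, hd, h⟩⟩
    · exact ⟨0, 0, fun h => absurd h ha⟩
  choose b d hbd using hbal'
  obtain ⟨s0, hs0⟩ := hne
  have hda : ∀ a ∈ S, d a ≠ a := by
    intro a ha h
    obtain ⟨_, _, h1, h2⟩ := hbd a ha
    rw [h] at h2
    exact h1 (by linear_combination h2)
  set N := S.erase s0 with hN
  have hNcard : N.card + 1 = S.card := Finset.card_erase_add_one hs0
  let B : Matrix N N ℝ := fun i j => (if (i:ZMod p) = j then 2 else 0) -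
    (if b i = j then 1 else 0) - (if d i = j then 1 else 0)
  let M : Matrix N N ℤ := fun i j => (if (i:ZMod p) = j then 2 else 0) -
    (if b i = j then 1 else 0) - (if d i = j then 1 else 0)
  have hsum : ∀ (R : Type) [Ring R] (g : ZMod p → R) (c : R) (x : ZMod p), g s0 = 0 → x ∈ S →
      ∑ j : N, (if x = j then c else 0) * g j = c * g x := by
    intro R _ g c x hg hx
    rw [Finset.sum_coe_sort N (fun j => (if x = j then c else 0) * g j)]
    simp only [ite_mul, zero_mul, Finset.sum_ite_eq]
    by_cases h : x = s0
    · simp [h, hg]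
    · simp [hN, h, hx]
  have hcore := core p B M (fun _ => 0) (by intro i j; simp [B, M]) (by
      intro i
      have hi : (i : ZMod p) ∈ S := Finset.mem_of_mem_erase i.2
      have := row_bound N (i:ZMod p) (b i) (d i) 1 1 (by simp) (by simp)
        (fun h => absurd h (hbd i hi).2.2.1) (fun h => absurd h (hda i hi))
      rw [← Finset.sum_coe_sort N] at this
      exact this)
    (fun j => (j : ZMod p) - s0) (by
      obtain ⟨hb1, _, hb2, _⟩ := hbd s0 hs0
      intro h
      have := congrFun h ⟨b s0, Finset.mem_erase.2 ⟨hb2, hb1⟩⟩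
      simp only [Pi.zero_apply] at this
      exact hb2 (sub_eq_zero.1 this))
    (by
      intro i
      have hi : (i : ZMod p) ∈ S := Finset.mem_of_mem_erase i.2
      obtain ⟨h1, h2, h3, h4⟩ := hbd i hi
      simp only [M]
      push_cast
      have H := hsum (ZMod p) (fun x => x - s0)
      have e : ∀ (x : ZMod p) (c : ZMod p), x ∈ S →
        ∑ j : N, (if x = j then c else 0) * ((j:ZMod p) - s0) = c * (x - s0) :=
          fun x c hx => H c x (by simp) hx
      simp only [sub_mul _ _ ((_ : ZMod p) - s0), Finset.sum_sub_distrib]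
      rw [e _ _ hi, e _ _ h1, e _ _ h2]
      linear_combination -h4)
    (by
      refine le_trans ?_ hcon
      apply Nat.pow_le_pow_right (by norm_num)
      simp; omega)
  obtain ⟨z, hz, hz'⟩ := hcore
  obtain ⟨z, ⟨j0, hj0⟩, hz'⟩ : ∃ z : N → ℝ, (∃ j, 0 < z j) ∧ ∀ i, ∑ j, B i j * z j = 0 := by
    obtain ⟨j, hj⟩ := Function.ne_iff.1 hz
    rcases lt_or_gt_of_ne hj with h | h
    · refine ⟨fun i => - z i, ⟨j, by simpa using h⟩, fun i => ?_⟩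
      simp only [mul_neg, Finset.sum_neg_distrib, hz' i, neg_zero]
    · exact ⟨z, ⟨j, h⟩, hz'⟩
  let g : ZMod p → ℝ := fun x => if h : x ∈ N then z ⟨x, h⟩ else 0
  have hg0 : g s0 = 0 := by simp [g, hN]
  have hgz : ∀ j : N, z j = g j := by intro j; simp [g]
  have hgrel : ∀ x ∈ N, 2 * g x = g (b x) + g (d x) := by
    intro x hx
    have hi : x ∈ S := Finset.mem_of_mem_erase hx
    obtain ⟨h1, h2, h3, h4⟩ := hbd x hi
    have := hz' ⟨x, hx⟩
    simp only [B, hgz, sub_mul, Finset.sum_sub_distrib] at this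
    rw [hsum ℝ g _ _ hg0 hi, hsum ℝ g _ _ hg0 h1, hsum ℝ g _ _ hg0 h2] at this
    linarith
  obtain ⟨mx, hmx, hmax⟩ := S.exists_max_image g ⟨s0, hs0⟩
  have hpos : 0 < g mx := lt_of_lt_of_le (by rw [hgz] at hj0; exact hj0)
    (hmax j0 (Finset.mem_of_mem_erase j0.2))
  have hne0 : ∀ x, g x = g mx → x ≠ s0 := by
    rintro x hx rfl; linarith
  have hlt : (S.filter (fun x => g x = g mx)).card < S.card := by
    apply Finset.card_lt_card
    rw [Finset.filter_ssubset]
    exact ⟨s0, hs0, fun h => hne0 _ h rfl⟩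
  have := ih (S.filter (fun x => g x = g mx)) (by omega) ⟨mx, by simp [hmx]⟩ (by
    intro a ha
    rw [Finset.mem_filter] at ha
    obtain ⟨h1, h2, h3, h4⟩ := hbd a ha.1
    have hr := hgrel a (Finset.mem_erase.2 ⟨hne0 _ ha.2, ha.1⟩)
    have m1 := hmax _ h1
    have m2 := hmax _ h2
    refine ⟨b a, ?_, d a, ?_, h3, h4⟩ <;> rw [Finset.mem_filter]
    · exact ⟨h1, by linarith⟩
    · exact ⟨h2, by linarith⟩)
  have h3 : 3 ^ (S.filter (fun x => g x = g mx)).card ≤ 3 ^ S.card :=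
    Nat.pow_le_pow_right (by norm_num) hlt.le
  omega


/-- A choice of one element in each pair `x, -x`. -/
abbrev Ps {p : ℕ} (x : ZMod p) : Prop := x ≠ 0 ∧ 2 * x.val < p

def ab {p : ℕ} (x : ZMod p) : ZMod p := if Ps x then x else -x

def sg {p : ℕ} (x : ZMod p) : ℤ := if Ps x then 1 else -1

section
variable {p : ℕ} [Fact p.Prime]

lemma Ps_neg (hp5 : 5 ≤ p) {x : ZMod p} (hx : x ≠ 0) : Ps (-x) ↔ ¬ Ps x := by
  have hodd : p % 2 = 1 := (Nat.Prime.eq_two_or_odd (Fact.out : p.Prime)).resolve_left (by omega)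
  have h1 := ZMod.neg_val x
  rw [if_neg hx] at h1
  have h2 := ZMod.val_lt x
  simp only [Ps, ne_eq, neg_eq_zero, hx, not_false_eq_true, true_and, h1]
  omega

lemma ab_neg (hp5 : 5 ≤ p) (x : ZMod p) : ab (-x) = ab x := by
  by_cases hx : x = 0
  · simp [hx]
  · have := Ps_neg hp5 hx
    unfold ab
    by_cases h : Ps x
    · rw [if_pos h, if_neg (by tauto), neg_neg]
    · rw [if_neg h, if_pos (by tauto)]

lemma ab_or (x : ZMod p) : ab x = x ∨ ab x = -x := by
  unfold ab; split_ifs <;> simp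

lemma Ps_ab (hp5 : 5 ≤ p) {x : ZMod p} (hx : x ≠ 0) : Ps (ab x) := by
  have := Ps_neg hp5 hx
  by_cases h : Ps x
  · rw [ab, if_pos h]; exact h
  · rw [ab, if_neg h]; tauto

lemma ab_of_Ps {x : ZMod p} (hx : Ps x) : ab x = x := by rw [ab, if_pos hx]

lemma ab_zero : ab (0 : ZMod p) = 0 := by simp [ab]

lemma sg_of_Ps {x : ZMod p} (hx : Ps x) : sg x = 1 := by rw [sg, if_pos hx]

lemma sg_neg (hp5 : 5 ≤ p) {x : ZMod p} (hx : x ≠ 0) : sg (-x) = - sg x := by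
  have := Ps_neg hp5 hx
  unfold sg
  by_cases h : Ps x
  · rw [if_pos h, if_neg (by tauto)]
  · rw [if_neg h, if_pos (by tauto), neg_neg]

lemma sg_mul_ab (x : ZMod p) : (sg x : ZMod p) * ab x = x := by
  unfold sg ab; split_ifs <;> simp

lemma sg_abs (x : ZMod p) : |(sg x : ℝ)| = 1 := by
  unfold sg; split_ifs <;> simp

lemma eq_or_of_ab {x y : ZMod p} (h : ab x = ab y) : x = y ∨ x = -y := by
  rcases ab_or x with h1 | h1 <;> rcases ab_or y with h2 | h2 <;> rw [h1, h2] at h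
  · exact .inl h
  · exact .inr h
  · exact .inr (by rw [← h, neg_neg])
  · exact .inl (neg_injective h)

lemma three_ne (hp5 : 5 ≤ p) : (3 : ZMod p) ≠ 0 := by
  intro h
  have : ((3 : ℕ) : ZMod p) = 0 := by exact_mod_cast h
  rw [ZMod.natCast_eq_zero_iff] at this
  have := Nat.le_of_dvd (by norm_num) this
  omega

lemma pow_three_ne (hp5 : 5 ≤ p) {k : ℕ} (hk : 1 ≤ k) (hkp : 3 ^ k ≤ p) :
    (3 : ZMod p) ^ k ≠ 1 ∧ (3 : ZMod p) ^ k ≠ -1 := by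
  have h3 : 3 ≤ 3 ^ k := by simpa using Nat.pow_le_pow_right (n := 3) (by norm_num) hk
  have hodd : p % 2 = 1 := (Nat.Prime.eq_two_or_odd (Fact.out : p.Prime)).resolve_left (by omega)
  have h3odd : 3 ^ k % 2 = 1 := by rw [Nat.pow_mod]; simp
  constructor
  · intro h
    have : ((3 ^ k - 1 : ℕ) : ZMod p) = 0 := by
      rw [Nat.cast_sub (by omega)]; push_cast; rw [h]; simp
    rw [ZMod.natCast_eq_zero_iff] at this
    have := Nat.le_of_dvd (by omega) this
    omega
  · intro h
    have : ((3 ^ k + 1 : ℕ) : ZMod p) = 0 := by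
      push_cast; rw [h]; simp
    rw [ZMod.natCast_eq_zero_iff] at this
    obtain ⟨c, hc⟩ := this
    have hc1 : c ≠ 1 := by rintro rfl; omega
    have hc0 : c ≠ 0 := by rintro rfl; omega
    have : p * 2 ≤ p * c := Nat.mul_le_mul_left _ (by omega)
    omega

/-- Height of `a` under tripling in `A`. -/
noncomputable def ht (A : Finset (ZMod p)) (a : ZMod p) : ℕ :=
  sInf {i : ℕ | (3 : ZMod p) ^ (i + 1) * a ∉ A}

noncomputable def tp (A : Finset (ZMod p)) (a : ZMod p) : ZMod p := 3 ^ ht A a * a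

lemma ht_spec {A : Finset (ZMod p)} {a : ZMod p} (h : ∃ i, (3 : ZMod p) ^ (i + 1) * a ∉ A) :
    (3 : ZMod p) ^ (ht A a + 1) * a ∉ A :=
  Nat.sInf_mem (s := {i : ℕ | (3 : ZMod p) ^ (i + 1) * a ∉ A}) h

lemma ht_le_mem {A : Finset (ZMod p)} {a : ZMod p} (ha : a ∈ A) {i : ℕ} (hi : i ≤ ht A a) :
    (3 : ZMod p) ^ i * a ∈ A := by
  cases i with
  | zero => simpa using ha
  | succ i =>
    by_contra h
    have : ht A a ≤ i := Nat.sInf_le (s := {i : ℕ | (3 : ZMod p) ^ (i + 1) * a ∉ A}) h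
    omega

lemma ht_eq {A : Finset (ZMod p)} {a : ZMod p} {n : ℕ} (h1 : (3 : ZMod p) ^ (n + 1) * a ∉ A)
    (h2 : ∀ i < n, (3 : ZMod p) ^ (i + 1) * a ∈ A) : ht A a = n := by
  apply le_antisymm
  · exact Nat.sInf_le (s := {i : ℕ | (3 : ZMod p) ^ (i + 1) * a ∉ A}) h1
  · by_contra h
    push Not at h
    exact ht_spec ⟨n, h1⟩ (h2 _ h)

lemma ht_mul {A : Finset (ZMod p)} {a : ZMod p} (ha : a ∈ A)
    (h : ∃ i, (3 : ZMod p) ^ (i + 1) * a ∉ A) {j : ℕ}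
    (hj : j ≤ ht A a) : ht A (3 ^ j * a) = ht A a - j := by
  apply ht_eq
  · rw [← mul_assoc, ← pow_add, show ht A a - j + 1 + j = ht A a + 1 by omega]
    exact ht_spec h
  · intro i hi
    rw [← mul_assoc, ← pow_add]
    exact ht_le_mem ha (by omega)

lemma ht_neg {A : Finset (ZMod p)} (hs : ∀ a ∈ A, -a ∈ A) (a : ZMod p) : ht A (-a) = ht A a := by
  have : ∀ x, -x ∈ A ↔ x ∈ A := fun x => ⟨fun h => by simpa using hs _ h, hs x⟩
  simp only [ht, mul_neg, this]

lemma tp_neg {A : Finset (ZMod p)} (hs : ∀ a ∈ A, -a ∈ A) (a : ZMod p) :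
    tp A (-a) = - tp A a := by
  rw [tp, ht_neg hs, mul_neg, tp]

lemma main (hp5 : 5 ≤ p) (A : Finset (ZMod p)) (hs : ∀ a ∈ A, -a ∈ A)
    (hA : ∀ a ∈ A, ∃ b ∈ A, ∃ d ∈ A, b ≠ a ∧ b + d = 2 * a) (a0 : ZMod p) (ha0 : a0 ∈ A)
    (ha00 : a0 ≠ 0) : p < 3 ^ (A.filter Ps).card := by
  by_contra hcon
  push Not at hcon
  have h3 := three_ne hp5
  have habA : ∀ a ∈ A, ab a ∈ A := by
    intro a ha
    rcases ab_or a with h | h <;> rw [h]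
    · exact ha
    · exact hs a ha
  have hacyc : ∀ a, a ≠ 0 → ∃ i, (3 : ZMod p) ^ (i + 1) * a ∉ A := by
    intro a ha
    by_contra hc
    push Not at hc
    obtain ⟨i, hi, j, hj, hij, heq⟩ := Finset.exists_ne_map_eq_of_card_lt_of_maps_to
      (s := Finset.range ((A.filter Ps).card + 1)) (t := A.filter Ps)
      (f := fun j => ab ((3 : ZMod p) ^ (j + 1) * a)) (by simp) (by
        intro j _
        simp only [Finset.coe_filter, Set.mem_ofPred_eq]
        exact ⟨habA _ (hc j), Ps_ab hp5 (mul_ne_zero (pow_ne_zero _ h3) ha)⟩)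
    have key : ∀ i j, i < j → j < (A.filter Ps).card + 1 →
        ab ((3 : ZMod p) ^ (i + 1) * a) = ab ((3 : ZMod p) ^ (j + 1) * a) → False := by
      intro i j hij hj heq
      have hk := pow_three_ne hp5 (k := j - i) (by omega)
        ((Nat.pow_le_pow_right (by norm_num) (by omega)).trans hcon)
      have e : (3 : ZMod p) ^ (j + 1) * a = 3 ^ (j - i) * (3 ^ (i + 1) * a) := by
        rw [← mul_assoc, ← pow_add]; congr 2; omega
      have hne : (3 : ZMod p) ^ (i + 1) * a ≠ 0 := mul_ne_zero (pow_ne_zero _ h3) ha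
      rcases eq_or_of_ab heq.symm with h | h
      · rw [e] at h
        exact hk.1 (mul_right_cancel₀ hne (by rw [h, one_mul]))
      · rw [e] at h
        exact hk.2 (mul_right_cancel₀ hne (by rw [h]; ring))
    simp only [Finset.mem_range] at hi hj
    rcases lt_or_gt_of_ne hij with h | h
    · exact key i j h hj heq
    · exact key j i h hi heq.symm
  have hpow : ∀ (j : ℕ) {a : ZMod p}, a ≠ 0 → (3 : ZMod p) ^ j * a ≠ 0 :=
    fun j a ha => mul_ne_zero (pow_ne_zero _ h3) ha
  have htpne : ∀ {a : ZMod p}, a ≠ 0 → tp A a ≠ 0 := fun ha => hpow _ ha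
  have htp0 : tp A (0 : ZMod p) = 0 := by simp [tp]
  set N := A.filter (fun c => Ps c ∧ 3 * c ∉ A) with hN
  have hN0 : (0 : ZMod p) ∉ N := by simp [hN]
  have hsiff : ∀ x, -x ∈ A ↔ x ∈ A := fun x => ⟨fun h => by simpa using hs _ h, hs x⟩
  have htpN : ∀ a ∈ A, a ≠ 0 → ab (tp A a) ∈ N := by
    intro a ha ha'
    have h1 : tp A a ∈ A := ht_le_mem ha le_rfl
    have h2 : 3 * tp A a ∉ A := by
      have := ht_spec (hacyc a ha')
      rwa [pow_succ', mul_assoc] at this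
    rw [hN, Finset.mem_filter]
    refine ⟨habA _ h1, Ps_ab hp5 (htpne ha'), ?_⟩
    rcases ab_or (tp A a) with h | h <;> rw [h]
    · exact h2
    · rwa [mul_neg, hsiff]
  have htN : ∀ a, 3 * a ∉ A → ht A a = 0 := by
    intro a ha
    exact ht_eq (by simpa using ha) (by simp)
  have htpNN : ∀ a, 3 * a ∉ A → tp A a = a := by
    intro a ha
    rw [tp, htN a ha]; simp
  have hht_ab : ∀ a, ht A (ab a) = ht A a := by
    intro a
    rcases ab_or a with h | h <;> rw [h]
    exact ht_neg hs a
  have htp_ab : ∀ a, ab (tp A (ab a)) = ab (tp A a) := by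
    intro a
    rcases ab_or a with h | h <;> rw [h]
    rw [tp_neg hs, ab_neg hp5]
  let F : ZMod p → Finset (ZMod p) := fun c => (A.filter Ps).filter (fun a => ab (tp A a) = c)
  let K : ZMod p → ℕ := fun c => (F c).card - 1
  have hcount : ∑ j : N, (K j + 1) ≤ (A.filter Ps).card := by
    rw [Finset.sum_coe_sort N (fun j => K j + 1)]
    rw [Finset.card_eq_sum_card_fiberwise (s := A.filter Ps) (t := N) (f := fun a => ab (tp A a))
      (by
        intro a ha
        simp only [Finset.coe_filter, Set.mem_ofPred_eq] at ha
        exact htpN a ha.1 ha.2.1)]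
    apply Finset.sum_le_sum
    intro c hc
    have hcF : c ∈ F c := by
      rw [hN, Finset.mem_filter] at hc
      simp only [F, Finset.mem_filter]
      exact ⟨⟨hc.1, hc.2.1⟩, by rw [htpNN c hc.2.2, ab_of_Ps hc.2.1]⟩
    have : 0 < (F c).card := Finset.card_pos.2 ⟨c, hcF⟩
    show (F c).card - 1 + 1 ≤ (F c).card
    omega
  have hhtK : ∀ a ∈ A, a ≠ 0 → ht A a ≤ K (ab (tp A a)) := by
    intro a ha ha'
    have : (Finset.range (ht A a + 1)).card ≤ (F (ab (tp A a))).card := by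
      apply Finset.card_le_card_of_injOn (fun j => ab ((3 : ZMod p) ^ j * a))
      · intro j hj
        have hj' : j ≤ ht A a := by
          simp only [Finset.coe_range, Set.mem_Iio] at hj; omega
        simp only [F, Finset.coe_filter, Finset.mem_filter, Set.mem_ofPred_eq]
        refine ⟨⟨habA _ (ht_le_mem ha hj'), Ps_ab hp5 (hpow _ ha')⟩, ?_⟩
        rw [htp_ab]
        congr 1
        rw [tp, ht_mul ha (hacyc a ha') hj', ← mul_assoc, ← pow_add, tp]
        congr 2; omega
      · intro i hi j hj hij
        simp only [Finset.coe_range, Set.mem_Iio] at hi hj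
        have := congrArg (ht A) hij
        simp only at this
        rw [hht_ab, hht_ab, ht_mul ha (hacyc a ha') (by omega),
          ht_mul ha (hacyc a ha') (by omega)] at this
        omega
    rw [Finset.card_range] at this
    show ht A a ≤ (F (ab (tp A a))).card - 1
    omega
  have hbal' : ∀ a : ZMod p, ∃ b d : ZMod p, a ∈ A → b ∈ A ∧ d ∈ A ∧ b ≠ a ∧ b + d = 2 * a := by
    intro a
    by_cases ha : a ∈ A
    · obtain ⟨b, hb, d, hd, h⟩ := hA a ha
      exact ⟨b, d, fun _ => ⟨hb, hd, h⟩⟩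
    · exact ⟨0, 0, fun h => absurd h ha⟩
  choose b d hbd using hbal'
  let co : ZMod p → ℝ := fun x => (sg (tp A x) : ℝ) / 3 ^ ht A x
  have hco1 : ∀ x, |co x| ≤ 1 := by
    intro x
    simp only [co]
    rw [abs_div, sg_abs, abs_of_pos (by positivity)]
    rw [div_le_one (by positivity)]
    exact one_le_pow₀ (by norm_num)
  have hco3 : ∀ x, ht A x ≠ 0 → |co x| ≤ 1/3 := by
    intro x hx
    simp only [co]
    rw [abs_div, sg_abs, abs_of_pos (by positivity)]
    apply one_div_le_one_div_of_le (by norm_num)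
    exact le_self_pow₀ (by norm_num) hx
  let B : Matrix N N ℝ := fun i j => (if (i:ZMod p) = j then 2 else 0) -
    (if ab (tp A (b i)) = j then co (b i) else 0) - (if ab (tp A (d i)) = j then co (d i) else 0)
  let tm : ZMod p → ZMod p → ℤ := fun x j =>
    if ab (tp A x) = j then sg (tp A x) * 3 ^ (K j - ht A x) else 0
  let M : Matrix N N ℤ := fun i j => (if (i:ZMod p) = j then 2 * 3 ^ K j else 0) -
    tm (b i) j - tm (d i) j
  have htm : ∀ x ∈ A, ∀ j ∈ N, (tm x j : ℝ) = (if ab (tp A x) = j then co x else 0) * 3 ^ K j := by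
    intro x hx j hj
    simp only [tm]
    split_ifs with h
    · have hx0 : x ≠ 0 := by
        rintro rfl
        rw [htp0, ab_zero] at h
        exact hN0 (h ▸ hj)
      have hk := hhtK x hx hx0
      rw [h] at hk
      simp only [co]
      push_cast
      rw [pow_sub₀ _ (by norm_num) hk]
      field_simp
    · simp
  let v : ZMod p → ZMod p := fun j => j * (3 ^ K j)⁻¹
  have htmv : ∀ x ∈ A, ∑ j : N, (tm x j : ZMod p) * v j = x := by
    intro x hx
    rw [Finset.sum_coe_sort N (fun j => (tm x j : ZMod p) * v j)]
    by_cases hx0 : x = 0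
    · subst hx0
      apply Finset.sum_eq_zero
      intro j hj
      simp only [tm]
      rw [if_neg (by rw [htp0, ab_zero]; rintro rfl; exact hN0 hj)]
      simp
    · rw [Finset.sum_eq_single_of_mem (ab (tp A x)) (htpN x hx hx0) (by
        intro j _ hj
        simp only [tm]
        rw [if_neg (fun h => hj h.symm)]; simp)]
      have hk := hhtK x hx hx0
      simp only [tm, v, if_true]
      push_cast
      have e := sg_mul_ab (tp A x)
      have e2 : (3 : ZMod p) ^ (K (ab (tp A x)) - ht A x) * 3 ^ ht A x = 3 ^ K (ab (tp A x)) := by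
        rw [← pow_add]; congr 1; omega
      have e3 : (3 : ZMod p) ^ K (ab (tp A x)) ≠ 0 := pow_ne_zero _ h3
      calc _ = ((sg (tp A x) : ZMod p) * ab (tp A x)) * 3 ^ (K (ab (tp A x)) - ht A x) *
              (3 ^ K (ab (tp A x)))⁻¹ := by ring
        _ = (3 ^ (K (ab (tp A x)) - ht A x) * 3 ^ ht A x) * (3 ^ K (ab (tp A x)))⁻¹ * x := by
            rw [e]; nth_rewrite 1 [tp]; ring
        _ = x := by rw [e2, mul_inv_cancel₀ e3, one_mul]
  have hNA : ∀ c ∈ N, c ∈ A ∧ Ps c ∧ 3 * c ∉ A := by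
    intro c hc
    rw [hN, Finset.mem_filter] at hc
    exact hc
  have hcore := core p B M (fun j => K j) (by
      intro i j
      obtain ⟨h1, h2, -, -⟩ := hbd i (hNA i i.2).1
      simp only [M, B]
      rw [Int.cast_sub, Int.cast_sub, htm _ h1 _ j.2, htm _ h2 _ j.2, sub_mul, sub_mul]
      congr 2
      split_ifs <;> simp)
    (by
      intro i
      obtain ⟨hiA, hiP, hi3⟩ := hNA i i.2
      obtain ⟨h1, h2, h5, h4⟩ := hbd i hiA
      have hbb : ∀ x, ht A x = 0 → ab (tp A x) = i → x = i ∨ x = -(i : ZMod p) := by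
        intro x hx hx'
        rw [tp, hx, pow_zero, one_mul, ← ab_of_Ps hiP] at hx'
        exact eq_or_of_ab hx'
      have := row_bound N (i:ZMod p) (ab (tp A (b i))) (ab (tp A (d i))) (co (b i)) (co (d i))
        (hco1 _) (hco1 _)
        (fun h => hco3 _ (fun h0 => by
          rcases hbb _ h0 h with h | h
          · exact h5 h
          · rw [h] at h4
            exact hi3 (by rwa [show 3 * (i : ZMod p) = d i by linear_combination -h4])))
        (fun h => hco3 _ (fun h0 => by
          rcases hbb _ h0 h with h | h
          · rw [h] at h4
            exact h5 (by linear_combination h4)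
          · rw [h] at h4
            exact hi3 (by rwa [show 3 * (i : ZMod p) = b i by linear_combination -h4])))
      rw [← Finset.sum_coe_sort N] at this
      exact this)
    (fun j => v j)
    (by
      intro h
      have := congrFun h ⟨_, htpN a0 ha0 ha00⟩
      simp only [Pi.zero_apply, v] at this
      rcases mul_eq_zero.1 this with h | h
      · exact (Ps_ab hp5 (htpne ha00)).1 h
      · exact pow_ne_zero _ h3 (inv_eq_zero.1 h))
    (by
      intro i
      obtain ⟨hiA, hiP, hi3⟩ := hNA i i.2
      obtain ⟨h1, h2, h5, h4⟩ := hbd i hiA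
      have e : ∀ j : N, ((M i j : ℤ) : ZMod p) * v j =
          (if (i : ZMod p) = j then 2 * (i : ZMod p) else 0) - (tm (b i) j : ZMod p) * v j
            - (tm (d i) j : ZMod p) * v j := by
        intro j
        simp only [M]
        rw [Int.cast_sub, Int.cast_sub, sub_mul, sub_mul]
        congr 2
        split_ifs with h
        · have e3 : (3 : ZMod p) ^ K j ≠ 0 := pow_ne_zero _ h3
          simp only [v]
          push_cast
          rw [h]
          field_simp
        · simp
      rw [Finset.sum_congr rfl (fun j _ => e j), Finset.sum_sub_distrib, Finset.sum_sub_distrib,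
        htmv _ h1, htmv _ h2,
        Finset.sum_coe_sort N (fun j => if (i : ZMod p) = j then 2 * (i : ZMod p) else 0),
        Finset.sum_ite_eq, if_pos i.2]
      linear_combination -h4)
    ((Nat.pow_le_pow_right (by norm_num) hcount).trans hcon)
  obtain ⟨z, hz, hz'⟩ := hcore
  let zz : ZMod p → ℝ := fun x => if h : x ∈ N then z ⟨x, h⟩ else 0
  have hzz : ∀ j : N, z j = zz j := by intro j; simp [zz]
  have hzz0 : ∀ x, x ∉ N → zz x = 0 := by intro x hx; simp [zz, hx]
  let f : ZMod p → ℝ := fun x => co x * zz (ab (tp A x))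
  have hf0 : f 0 = 0 := by
    simp only [f]; rw [htp0, ab_zero, hzz0 _ hN0, mul_zero]
  have hfneg : ∀ x, f (-x) = - f x := by
    intro x
    by_cases hx : x = 0
    · simp [hx, hf0]
    · simp only [f, co]
      rw [tp_neg hs, ht_neg hs, ab_neg hp5, sg_neg hp5 (htpne hx)]
      push_cast; ring
  have hfN : ∀ c ∈ N, f c = zz c := by
    intro c hc
    obtain ⟨_, h2, h3⟩ := hNA c hc
    simp only [f, co]
    rw [htpNN c h3, htN c h3, ab_of_Ps h2, sg_of_Ps h2]; simp
  have hrelN : ∀ c ∈ N, 2 * f c = f (b c) + f (d c) := by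
    intro c hc
    have := hz' ⟨c, hc⟩
    simp only [B, hzz, sub_mul, Finset.sum_sub_distrib] at this
    have e : ∀ (x : ZMod p) (r : ℝ), ∑ j : N, (if x = j then r else 0) * zz j = r * zz x := by
      intro x r
      rw [Finset.sum_coe_sort N (fun j => (if x = j then r else 0) * zz j)]
      simp only [ite_mul, zero_mul, Finset.sum_ite_eq]
      split_ifs with h
      · rfl
      · rw [hzz0 x h, mul_zero]
    rw [e, e, e] at this
    rw [hfN c hc]
    simp only [f]
    linarith
  have hrel : ∀ a ∈ A, a ≠ 0 → 3 * a ∉ A → ∃ b ∈ A, ∃ d ∈ A, b ≠ a ∧ b + d = 2 * a ∧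
      2 * f a = f b + f d := by
    intro a ha ha' h3a
    by_cases hP : Ps a
    · obtain ⟨h1, h2, h5, h4⟩ := hbd a ha
      exact ⟨b a, h1, d a, h2, h5, h4, hrelN a (by rw [hN, Finset.mem_filter]; exact ⟨ha, hP, h3a⟩)⟩
    · obtain ⟨h1, h2, h5, h4⟩ := hbd (-a) (hs a ha)
      have := hrelN (-a) (by
        rw [hN, Finset.mem_filter]
        exact ⟨hs a ha, (Ps_neg hp5 ha').2 hP, by rwa [mul_neg, hsiff]⟩)
      refine ⟨_, hs _ h1, _, hs _ h2, fun h => h5 (neg_eq_iff_eq_neg.1 h),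
        by linear_combination -h4, ?_⟩
      rw [hfneg, hfneg]
      rw [hfneg] at this
      linarith
  obtain ⟨mx, hmx, hmax⟩ := A.exists_max_image f ⟨a0, ha0⟩
  have hpos : 0 < f mx := by
    obtain ⟨j, hj⟩ := Function.ne_iff.1 hz
    have hjA := (hNA j j.2).1
    have e : f j = z j := by rw [hfN j j.2, hzz]
    have h1 := hmax j hjA
    have h2 := hmax (-j) (hs _ hjA)
    rw [hfneg] at h2
    rcases lt_or_gt_of_ne hj with h | h <;> simp only [Pi.zero_apply] at h <;> linarith
  set S := A.filter (fun x => f x = f mx) with hS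
  have hbalS := balanced p S.card S le_rfl ⟨mx, by simp [hS, hmx]⟩ (by
    intro a ha
    rw [hS, Finset.mem_filter] at ha
    obtain ⟨haA, haf⟩ := ha
    have ha0 : a ≠ 0 := by rintro rfl; linarith
    have hh : ht A a = 0 := by
      by_contra hne
      have h1 := hmax (tp A a) (ht_le_mem haA le_rfl)
      have e1 : ht A (tp A a) = 0 := by
        rw [tp, ht_mul haA (hacyc a ha0) le_rfl]; simp
      have e2 : tp A (tp A a) = tp A a := by
        rw [tp, e1]; simp
      have e3 : f (tp A a) = 3 ^ ht A a * f a := by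
        simp only [f, co]
        rw [e2, e1]
        field_simp
      rw [e3, haf] at h1
      have : (1:ℝ) < 3 ^ ht A a := one_lt_pow₀ (by norm_num) hne
      nlinarith
    have h3a : 3 * a ∉ A := by
      have := ht_spec (hacyc a ha0)
      rw [hh] at this
      simpa using this
    obtain ⟨b, hb, d, hd, h1, h2, h5⟩ := hrel a haA ha0 h3a
    have m1 := hmax _ hb
    have m2 := hmax _ hd
    refine ⟨b, ?_, d, ?_, h1, h2⟩ <;> rw [hS, Finset.mem_filter]
    · exact ⟨hb, by linarith⟩
    · exact ⟨hd, by linarith⟩)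
  have hScard : S.card ≤ (A.filter Ps).card := by
    apply Finset.card_le_card_of_injOn ab
    · intro x hx
      simp only [hS, Finset.coe_filter, Set.mem_ofPred_eq] at hx ⊢
      refine ⟨habA _ hx.1, Ps_ab hp5 ?_⟩
      rintro rfl; linarith
    · intro x hx y hy hxy
      simp only [hS, Finset.coe_filter, Set.mem_ofPred_eq] at hx hy
      rcases eq_or_of_ab hxy with h | h
      · exact h
      · rw [h, hfneg] at hx
        linarith [hx.2, hy.2]
  have : 3 ^ S.card ≤ 3 ^ (A.filter Ps).card := Nat.pow_le_pow_right (by norm_num) hScard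
  omega

lemma card_half (hp5 : 5 ≤ p) (A : Finset (ZMod p)) (hs : ∀ a ∈ A, -a ∈ A) :
    2 * (A.filter Ps).card ≤ (A.erase 0).card := by
  have h1 := Finset.card_filter_add_card_filter_not (s := A.erase 0) (fun x : ZMod p => Ps x)
  have h2 : (A.filter Ps).card ≤ ((A.erase 0).filter (fun x : ZMod p => Ps x)).card := by
    apply Finset.card_le_card
    intro x hx
    simp only [Finset.mem_filter, Finset.mem_erase] at hx ⊢
    exact ⟨⟨hx.2.1, hx.1⟩, hx.2⟩
  have h3 : (A.filter Ps).card ≤ ((A.erase 0).filter (fun x : ZMod p => ¬ Ps x)).card := by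
    apply Finset.card_le_card_of_injOn (fun x => -x)
    · intro x hx
      rw [Finset.mem_coe, Finset.mem_filter] at hx
      rw [Finset.mem_coe, Finset.mem_filter, Finset.mem_erase]
      refine ⟨⟨neg_ne_zero.2 hx.2.1, hs _ hx.1⟩, ?_⟩
      rw [Ps_neg hp5 hx.2.1, not_not]
      exact hx.2
    · exact fun x _ y _ h => neg_injective h
  omega

end

end UD

/-- Let `p ≥ 5` be a prime and let `A` be a nonempty symmetric subset of `𝔽_p` with
`|A \ {0}| ≤ 2·log₃(p)`. Then `A` has a unique difference. -/
theorem unique_difference_of_symmetric (p : ℕ) (hp : p.Prime) (hp5 : 5 ≤ p)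
    (A : Finset (ZMod p)) (hA : A.Nonempty) (hsym : A = -A)
    (hcard : ((A.erase 0).card : ℝ) ≤ 2 * Real.logb 3 p) :
    HasUniqueDifference A := by
  have : Fact p.Prime := ⟨hp⟩
  have hs : ∀ a ∈ A, -a ∈ A := by
    intro a ha
    rw [hsym] at ha
    exact Finset.mem_neg'.1 ha
  by_contra hcon
  have hB : ∀ a ∈ A, ∃ b ∈ A, ∃ d ∈ A, b ≠ a ∧ b + d = 2 * a := by
    intro a ha
    by_contra hno
    push Not at hno
    apply hcon
    refine ⟨2 * a, ?_⟩
    rw [Finset.card_eq_one]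
    refine ⟨(a, -a), ?_⟩
    ext ⟨x, y⟩
    simp only [Finset.mem_filter, Finset.mem_product, Finset.mem_singleton, Prod.mk.injEq]
    constructor
    · rintro ⟨⟨hx, hy⟩, hxy⟩
      by_cases h : x = a
      · exact ⟨h, by rw [h] at hxy; linear_combination -hxy⟩
      · exact absurd (by rw [← hxy]; ring) (hno x hx (-y) (hs y hy) h)
    · rintro ⟨rfl, rfl⟩
      exact ⟨⟨ha, hs _ ha⟩, by ring⟩
  obtain ⟨a0, ha0, ha00⟩ : ∃ a ∈ A, a ≠ 0 := by
    obtain ⟨a, ha⟩ := hA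
    by_cases h : a = 0
    · obtain ⟨b, hb, _, _, hne, _⟩ := hB a ha
      exact ⟨b, hb, h ▸ hne⟩
    · exact ⟨a, ha, h⟩
  have h1 := UD.main hp5 A hs hB a0 ha0 ha00
  have h2 := UD.card_half hp5 A hs
  have h3 : ((A.filter UD.Ps).card : ℝ) ≤ Real.logb 3 p := by
    have : (2 * (A.filter UD.Ps).card : ℝ) ≤ ((A.erase 0).card : ℝ) := by exact_mod_cast h2
    linarith
  rw [Real.le_logb_iff_rpow_le (by norm_num) (by exact_mod_cast hp.pos), Real.rpow_natCast] at h3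
  have h4 : 3 ^ (A.filter UD.Ps).card ≤ p := by exact_mod_cast h3
  omega
end

section
/- For every prime p, every nonempty symmetric subset A of 𝔽_p with |A| ≤ 2·log₃(p) has a unique difference. (In the paper's notation: g(p) ≥ 2·log₃(p), where g(p) is the largest number such that every symmetric subset of 𝔽_p with at most g(p) elements has a unique difference.) -/
open Finset Pointwise

lemma hadamard_fin {n : ℕ} (B : Matrix (Fin n) (Fin n) ℝ) :
    |B.det| ≤ ∏ i, ‖(WithLp.toLp 2 (B i) : EuclideanSpace ℝ (Fin n))‖ := by
  have : Fact (Module.finrank ℝ (EuclideanSpace ℝ (Fin n)) = n) := ⟨by simp⟩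
  let b := EuclideanSpace.basisFun (Fin n) ℝ
  let o := b.toBasis.orientation
  have h := o.abs_volumeForm_apply_le (fun i => (WithLp.toLp 2 (B i) : EuclideanSpace ℝ (Fin n)))
  rw [o.volumeForm_robust b rfl, Module.Basis.det_apply] at h
  have e : b.toBasis.toMatrix (fun i => (WithLp.toLp 2 (B i) : EuclideanSpace ℝ (Fin n))) = B.transpose := by
    ext i j
    simp [Module.Basis.toMatrix_apply, b]
  rwa [e, Matrix.det_transpose] at h

lemma hadamard {ι : Type*} [Fintype ι] [DecidableEq ι] (B : Matrix ι ι ℝ) :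
    |B.det| ≤ ∏ i, ‖(WithLp.toLp 2 (B i) : EuclideanSpace ℝ ι)‖ := by
  let e := (Fintype.equivFin ι).symm
  have h := hadamard_fin (B.submatrix e e)
  rw [Matrix.det_submatrix_equiv_self] at h
  refine h.trans (le_of_eq ?_)
  rw [← e.prod_comp]
  refine Finset.prod_congr rfl fun i _ => ?_
  simp only [EuclideanSpace.norm_eq, Matrix.submatrix_apply]
  congr 1
  exact e.sum_comp (fun j => ‖B (e i) j‖ ^ 2)

lemma key {p : ℕ} [Fact p.Prime] {ι κ : Type*} [Fintype ι] [DecidableEq ι] [Nonempty ι]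
    (d : ι → ℕ) (hd : ∀ i, 0 < d i) (y : ι → ZMod p)
    (hp : 3 ^ Fintype.card ι * ∏ i, d i ≤ p)
    (r : κ → ι → ℤ) (hr : ∀ k, ∑ i, (r k i : ZMod p) * y i = 0)
    (v : κ → EuclideanSpace ℝ ι) (hv : ∀ k i, v k i * d i = r k i) (hn : ∀ k, ‖v k‖ < 3)
    (w : ι → ℤ) (w' : EuclideanSpace ℝ ι) (hw : ∀ i, w' i * d i = w i)
    (hs : w' ∈ Submodule.span ℝ (Set.range v)) :
    ∑ i, (w i : ZMod p) * y i = 0 := by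
  classical
  obtain ⟨b, hbs, hspan, hli⟩ := exists_linearIndependent ℝ (Set.range v)
  let E : Set (EuclideanSpace ℝ ι) := Set.range (fun i => EuclideanSpace.single i (1:ℝ))
  obtain ⟨b', hb't, hbb', hsp', hli'⟩ :=
    exists_linearIndepOn_id_extension (t := b ∪ E) (s := b) hli Set.subset_union_left
  have htop : ⊤ ≤ Submodule.span ℝ (Set.range ((↑) : b' → EuclideanSpace ℝ ι)) := by
    rw [Subtype.range_coe]
    have h1 : Submodule.span ℝ E ≤ Submodule.span ℝ b' :=
      Submodule.span_le.2 (Set.subset_union_right.trans hsp')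
    refine le_trans ?_ h1
    have := (EuclideanSpace.basisFun ι ℝ).toBasis.span_eq
    rw [← this]
    apply le_of_eq
    congr 1
    ext x; simp [E]
  let β0 := Module.Basis.mk hli' htop
  have hfin : Finite b' := Module.Finite.finite_basis β0
  have : Fintype b' := Fintype.ofFinite _
  have hcard : Fintype.card b' = Fintype.card ι := by
    rw [← Module.finrank_eq_card_basis β0]; simp
  let e : b' ≃ ι := Fintype.equivOfCardEq hcard
  let β := β0.reindex e
  have hβ : ∀ i, β i = (e.symm i : EuclideanSpace ℝ ι) := by intro i; simp [β, β0]
  let B : Matrix ι ι ℝ := fun i j => β i j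
  have hz : ∀ i, ∃ z : ι → ℤ, (∀ j, β i j * d j = z j) ∧ ‖β i‖ < 3 ∧
      (β i ∈ b → ∑ j, (z j : ZMod p) * y j = 0) := by
    intro i
    by_cases hb : β i ∈ b
    · obtain ⟨k, hk⟩ := hbs hb
      exact ⟨r k, by rw [← hk]; exact hv k, by rw [← hk]; exact hn k, fun _ => hr k⟩
    · have : β i ∈ b ∪ E := by rw [hβ]; exact hb't (e.symm i).2
      obtain ⟨k, hk⟩ := this.resolve_left hb
      refine ⟨fun j => if j = k then d k else 0, ?_, ?_, fun h => absurd h hb⟩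
      · intro j; rw [← hk]
        by_cases hj : j = k
        · subst hj; simp
        · simp [hj]
      · rw [← hk]; simp
  choose z hz1 hz2 hz3 using hz
  let N : Matrix ι ι ℤ := Matrix.of z
  have hNB : N.map (Int.cast : ℤ → ℝ) = Matrix.of (fun i j => (d j : ℝ) * B i j) := by
    ext i j; simp [N, B, ← hz1, mul_comm]
  have hdet : ((N.det : ℤ) : ℝ) = (∏ i, (d i : ℝ)) * B.det := by
    have := Matrix.det_mul_row (fun i => (d i : ℝ)) B
    rw [← this, ← hNB]
    exact Int.cast_det N
  have hBdet : B.det ≠ 0 := by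
    have h2 : LinearIndependent ℝ B.row := by
      have := β.linearIndependent.map' (WithLp.linearEquiv 2 ℝ (ι → ℝ)).toLinearMap (LinearEquiv.ker _)
      exact this
    have := Matrix.linearIndependent_rows_iff_isUnit.1 h2
    exact ((Matrix.isUnit_iff_isUnit_det _).1 this).ne_zero
  have hdpos : 0 < ∏ i, (d i : ℝ) := Finset.prod_pos fun i _ => by exact_mod_cast hd i
  have hN0 : N.det ≠ 0 := by
    intro h
    rw [h, Int.cast_zero] at hdet
    exact mul_ne_zero hdpos.ne' hBdet hdet.symm
  have hBlt : |B.det| < 3 ^ Fintype.card ι := by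
    refine (hadamard B).trans_lt ?_
    have : ∏ i, ‖(WithLp.toLp 2 (B i) : EuclideanSpace ℝ ι)‖ < ∏ i : ι, (3:ℝ) := by
      apply Finset.prod_lt_prod_of_nonempty
      · intro i _
        have := β.ne_zero i
        have h3 : (WithLp.toLp 2 (B i) : EuclideanSpace ℝ ι) = β i := rfl
        rw [h3]
        exact norm_pos_iff.2 this
      · intro i _; exact hz2 i
      · exact Finset.univ_nonempty
    simpa using this
  have hNlt : |N.det| < p := by
    have : |(N.det : ℝ)| < p := by
      rw [hdet, abs_mul, abs_of_pos hdpos]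
      calc (∏ i, (d i : ℝ)) * |B.det| < (∏ i, (d i : ℝ)) * 3 ^ Fintype.card ι := by gcongr
        _ ≤ p := by rw [mul_comm]; exact_mod_cast hp
    exact_mod_cast this
  have hNp : ((N.det : ℤ) : ZMod p) ≠ 0 := by
    rw [Ne, ZMod.intCast_zmod_eq_zero_iff_dvd]
    intro h
    have := Int.le_of_dvd (abs_pos.2 hN0) ((dvd_abs _ _).2 h)
    omega
  let g : ι → ℤ := Matrix.vecMul w N.adjugate
  have hg : Matrix.vecMul g N = N.det • w := by
    simp [g, Matrix.vecMul_vecMul, Matrix.adjugate_mul]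
  have hc : ∀ j, (w j : ℝ) = ∑ i, β.repr w' i * (z i j : ℝ) := by
    intro j
    rw [← hw]
    simp only [← hz1]
    have h0 : w' j = ∑ i, β.repr w' i * β i j := by
      have h1 := congrArg (fun x : EuclideanSpace ℝ ι => x j) (β.sum_repr w')
      simp only [WithLp.ofLp_sum, Finset.sum_apply, PiLp.smul_apply, smul_eq_mul] at h1
      exact h1.symm
    rw [h0, Finset.sum_mul]
    simp only [mul_assoc]
  have hgc : ∀ i, (g i : ℝ) = N.det * β.repr w' i := by
    have h1 : (fun j => (w j : ℝ)) = Matrix.vecMul (fun i => β.repr w' i) (N.map (Int.cast : ℤ → ℝ)) := by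
      ext j; rw [hc]; simp [Matrix.vecMul, dotProduct, N]
    have h2 : (fun i => (g i : ℝ)) = Matrix.vecMul (fun j => (w j : ℝ)) (N.map (Int.cast : ℤ → ℝ)).adjugate := by
      have : (N.map (Int.cast : ℤ → ℝ)).adjugate = N.adjugate.map (Int.cast : ℤ → ℝ) :=
        ((Int.castRingHom ℝ).map_adjugate N).symm
      rw [this]
      ext i; simp [g, Matrix.vecMul, dotProduct]
    intro i
    have h3 := congrFun h2 i
    rw [h1, Matrix.vecMul_vecMul, Matrix.mul_adjugate] at h3
    have h4 : (N.map (Int.cast : ℤ → ℝ)).det = N.det := (Int.cast_det N).symm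
    rw [h4] at h3
    simpa [Matrix.vecMul_smul] using h3
  have hg0 : ∀ i, β i ∉ b → g i = 0 := by
    intro i hi
    have h1 : w' ∈ Submodule.span ℝ (Set.image β {i | β i ∈ b}) := by
      rw [← hspan] at hs
      refine Submodule.span_mono ?_ hs
      intro x hx
      refine ⟨e ⟨x, hbb' hx⟩, ?_, ?_⟩
      · simp [hβ, hx]
      · simp [hβ]
    rw [β.mem_span_image] at h1
    have h2 : β.repr w' i = 0 := by
      by_contra h
      exact hi (h1 (by simpa using h))
    have := hgc i
    rw [h2] at this
    simpa using this
  have hfinal : (N.det : ZMod p) * ∑ j, (w j : ZMod p) * y j = 0 := by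
    have h1 : ∀ j, (N.det : ZMod p) * (w j : ZMod p) = ∑ i, (g i : ZMod p) * (z i j : ZMod p) := by
      intro j
      have := congrFun hg j
      simp only [Matrix.vecMul, dotProduct, Pi.smul_apply, smul_eq_mul] at this
      have h2 := congrArg (Int.cast : ℤ → ZMod p) this
      rw [Int.cast_sum, Int.cast_mul] at h2
      rw [← h2]
      simp [N]
    simp_rw [Finset.mul_sum, ← mul_assoc, h1, Finset.sum_mul]
    rw [Finset.sum_comm]
    apply Finset.sum_eq_zero
    intro i _
    simp_rw [mul_assoc, ← Finset.mul_sum]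
    by_cases hi : β i ∈ b
    · rw [hz3 i hi, mul_zero]
    · simp [hg0 i hi]
  exact (mul_eq_zero.1 hfinal).resolve_left hNp

lemma key2 {p : ℕ} [Fact p.Prime] {ι : Type*} [Fintype ι] [DecidableEq ι] [Nonempty ι]
    (d : ι → ℕ) (hd : ∀ i, 0 < d i) (y : ι → ZMod p)
    (hp : 3 ^ Fintype.card ι * ∏ i, d i ≤ p)
    (j k : ι → ι) (x z : ι → ℤ)
    (hx : ∀ t, |x t| ≤ d (j t)) (hx3 : ∀ t, j t = t → 3 * |x t| ≤ d (j t))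
    (hz : ∀ t, |z t| ≤ d (k t)) (hz3 : ∀ t, k t = t → 3 * |z t| ≤ d (k t))
    (h : ∀ t, 2 * (d t : ZMod p) * y t = x t * y (j t) + z t * y (k t)) :
    ∃ t, (x t : ZMod p) * y (j t) = d t * y t := by
  classical
  have hdR : ∀ i, (0:ℝ) < d i := fun i => by exact_mod_cast hd i
  let e : ι → EuclideanSpace ℝ ι := fun i => EuclideanSpace.single i (1:ℝ)
  have he : ∀ i, ‖e i‖ = 1 := fun i => by simp [e]
  have hee : ∀ i i', i ≠ i' → inner ℝ (e i) (e i') = 0 := fun i i' hi => by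
    simp [e, EuclideanSpace.inner_single_left, hi]
  let α : ι → ℝ := fun t => x t / d (j t)
  let γ : ι → ℝ := fun t => z t / d (k t)
  have hα : ∀ t, |α t| ≤ 1 := fun t => by
    simp only [α, abs_div, Nat.abs_cast]
    rw [div_le_one (hdR _)]; exact_mod_cast hx t
  have hγ : ∀ t, |γ t| ≤ 1 := fun t => by
    simp only [γ, abs_div, Nat.abs_cast]
    rw [div_le_one (hdR _)]; exact_mod_cast hz t
  have hα3 : ∀ t, j t = t → |α t| ≤ 1 / 3 := fun t ht => by
    simp only [α, abs_div, Nat.abs_cast]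
    rw [div_le_iff₀ (hdR _)]
    have : (3 : ℝ) * |(x t : ℝ)| ≤ d (j t) := by exact_mod_cast hx3 t ht
    linarith
  have hγ3 : ∀ t, k t = t → |γ t| ≤ 1 / 3 := fun t ht => by
    simp only [γ, abs_div, Nat.abs_cast]
    rw [div_le_iff₀ (hdR _)]
    have : (3 : ℝ) * |(z t : ℝ)| ≤ d (k t) := by exact_mod_cast hz3 t ht
    linarith
  let v : ι → EuclideanSpace ℝ ι := fun t => (2:ℝ) • e t - α t • e (j t) - γ t • e (k t)
  have horth : ∀ (a : ℝ) (i : ι) (u : EuclideanSpace ℝ ι), inner ℝ (e i) u = 0 →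
      ‖a • e i - u‖ ^ 2 = a ^ 2 + ‖u‖ ^ 2 := by
    intro a i u hu
    rw [norm_sub_sq_real, inner_smul_left, hu, norm_smul, he]
    simp
  have hvn : ∀ t, ‖v t‖ < 3 := by
    intro t
    have ha := abs_le.1 (hα t)
    have hg := abs_le.1 (hγ t)
    by_cases h1 : j t = t
    · have ha3 := abs_le.1 (hα3 t h1)
      by_cases h2 : k t = t
      · have hg3 := abs_le.1 (hγ3 t h2)
        have : v t = (2 - α t - γ t) • e t := by
          simp only [v, h1, h2]; module
        rw [this, norm_smul, he, mul_one, Real.norm_eq_abs, abs_lt]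
        constructor <;> linarith
      · have : v t = (2 - α t) • e t - γ t • e (k t) := by
          simp only [v, h1]; module
        have h3 := horth (2 - α t) t (γ t • e (k t)) (by
          rw [inner_smul_right, hee _ _ (Ne.symm h2), mul_zero])
        rw [← this, norm_smul, he, mul_one, Real.norm_eq_abs, sq_abs] at h3
        nlinarith [norm_nonneg (v t)]
    · by_cases h2 : k t = t
      · have hg3 := abs_le.1 (hγ3 t h2)
        have : v t = (2 - γ t) • e t - α t • e (j t) := by
          simp only [v, h2]; module
        have h3 := horth (2 - γ t) t (α t • e (j t)) (by
          rw [inner_smul_right, hee _ _ (Ne.symm h1), mul_zero])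
        rw [← this, norm_smul, he, mul_one, Real.norm_eq_abs, sq_abs] at h3
        nlinarith [norm_nonneg (v t)]
      · have : v t = (2:ℝ) • e t - (α t • e (j t) + γ t • e (k t)) := by
          simp only [v]; module
        have h3 := horth 2 t (α t • e (j t) + γ t • e (k t)) (by
          rw [inner_add_right, inner_smul_right, inner_smul_right, hee _ _ (Ne.symm h1),
            hee _ _ (Ne.symm h2), mul_zero, mul_zero, add_zero])
        have h4 : ‖α t • e (j t) + γ t • e (k t)‖ ≤ 2 := by
          refine (norm_add_le _ _).trans ?_
          rw [norm_smul, norm_smul, he, he, Real.norm_eq_abs, Real.norm_eq_abs]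
          linarith [hα t, hγ t]
        rw [← this] at h3
        nlinarith [norm_nonneg (v t), norm_nonneg (α t • e (j t) + γ t • e (k t))]
  let S := Submodule.span ℝ (Set.range v)
  let P : EuclideanSpace ℝ ι →ₗ[ℝ] EuclideanSpace ℝ ι :=
    LinearMap.id - S.starProjection.toLinearMap
  have hP : ∀ u, P u = 0 ↔ u ∈ S := by
    intro u
    have h0 : P u = u - S.starProjection u := rfl
    rw [← Submodule.starProjection_eq_self_iff (K := S), h0, sub_eq_zero, eq_comm]
  obtain ⟨t, ht⟩ := Finite.exists_max (fun t => ‖P (e t)‖)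
  have hb : ∀ (c : ℝ) i, |c| ≤ 1 → ‖P (c • e i)‖ ≤ ‖P (e t)‖ := by
    intro c i hc
    rw [map_smul, norm_smul, Real.norm_eq_abs]
    have : ‖P (e i)‖ ≤ ‖P (e t)‖ := ht i
    nlinarith [norm_nonneg (P (e i)), abs_nonneg c]
  have hPv : P (v t) = 0 := (hP _).2 (Submodule.subset_span ⟨t, rfl⟩)
  have hsum : P (α t • e (j t)) + P (γ t • e (k t)) = (2:ℝ) • P (e t) := by
    have : P (v t) = (2:ℝ) • P (e t) - P (α t • e (j t)) - P (γ t • e (k t)) := by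
      simp only [v, map_sub, map_smul]
    rw [this] at hPv
    rw [sub_sub, sub_eq_zero] at hPv
    exact hPv.symm
  have heq : P (α t • e (j t)) = P (e t) := by
    have h1 := hb (α t) (j t) (hα t)
    have h2 := hb (γ t) (k t) (hγ t)
    generalize P (α t • e (j t)) = a at *
    generalize P (γ t • e (k t)) = c at *
    generalize P (e t) = q at *
    have h3 := parallelogram_law_with_norm ℝ a c
    rw [hsum, norm_smul] at h3
    have h4 : ‖a - c‖ * ‖a - c‖ ≤ 0 := by
      norm_num at h3
      nlinarith [norm_nonneg a, norm_nonneg c, norm_nonneg q]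
    have h5 : ‖a - c‖ = 0 := by nlinarith [norm_nonneg (a - c)]
    have h6 : a = c := sub_eq_zero.1 (norm_eq_zero.1 h5)
    rw [← h6, ← two_smul ℝ a] at hsum
    exact smul_right_injective _ (two_ne_zero) hsum
  have hmem : e t - α t • e (j t) ∈ S := by
    rw [← hP, map_sub, heq, sub_self]
  refine ⟨t, ?_⟩
  have hαd : ∀ t, α t * d (j t) = x t := fun t => div_mul_cancel₀ _ (hdR _).ne'
  have hγd : ∀ t, γ t * d (k t) = z t := fun t => div_mul_cancel₀ _ (hdR _).ne'
  have hsg : ∀ (i l : ι), (e i) l * (d l : ℝ) = (Pi.single i (d i : ℝ) : ι → ℝ) l := by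
    intro i l
    by_cases hl : l = i
    · subst hl; simp [e]
    · simp [e, hl]
  have hsg2 : ∀ (c : ℝ) (m : ℤ) (i l : ι), c * d i = m →
      (c * (e i) l) * (d l : ℝ) = ((Pi.single i m : ι → ℤ) l : ℤ) := by
    intro c m i l hc
    by_cases hl : l = i
    · subst hl; simp [e, hc]
    · simp [e, hl]
  have hsumy : ∀ (i : ι) (m : ℤ), ∑ l, (((Pi.single i m : ι → ℤ) l : ℤ) : ZMod p) * y l = m * y i := by
    intro i m
    rw [Finset.sum_eq_single i]
    · simp
    · intro l _ hl; simp [hl]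
    · simp
  have hfin := key d hd y hp
    (fun t => Pi.single t (2 * d t : ℤ) - Pi.single (j t) (x t) - Pi.single (k t) (z t))
    (by
      intro t
      simp only [Pi.sub_apply, Int.cast_sub, sub_mul, Finset.sum_sub_distrib, hsumy]
      have := h t
      push_cast
      rw [this]; ring) v
    (by
      intro t l
      simp only [v, Pi.sub_apply, Int.cast_sub, PiLp.sub_apply, PiLp.smul_apply, smul_eq_mul, sub_mul]
      rw [hsg2 _ (2 * d t : ℤ) _ _ (by push_cast; ring), hsg2 _ _ _ _ (hαd t), hsg2 _ _ _ _ (hγd t)])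
    hvn
    (Pi.single t (d t : ℤ) - Pi.single (j t) (x t)) (e t - α t • e (j t))
    (by
      intro l
      simp only [Pi.sub_apply, Int.cast_sub, PiLp.sub_apply, PiLp.smul_apply, smul_eq_mul, sub_mul]
      rw [hsg2 _ _ _ _ (hαd t), ← hsg2 1 (d t : ℤ) t l (by simp), one_mul])
    hmem
  simp only [Pi.sub_apply, Int.cast_sub, sub_mul, Finset.sum_sub_distrib, hsumy] at hfin
  rw [sub_eq_zero] at hfin
  rw [← hfin]; simp

lemma no_cycle {p : ℕ} [Fact p.Prime] (h5 : 5 ≤ p) (A : Finset (ZMod p))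
    (hneg : ∀ a ∈ A, -a ∈ A) (hpow : ∀ n, 2 * n ≤ A.card → 3 ^ n ≤ p)
    (a : ZMod p) (ha0 : a ≠ 0) (hall : ∀ k, 3 ^ k * a ∈ A) : False := by
  classical
  have hpr : p.Prime := Fact.out
  have hodd : p % 2 = 1 := (hpr.eq_two_or_odd).resolve_left (by omega)
  have h3 : (3 : ZMod p) ≠ 0 := by
    intro h
    have h' : ((3 : ℕ) : ZMod p) = 0 := by exact_mod_cast h
    rw [ZMod.natCast_eq_zero_iff] at h'
    have := Nat.le_of_dvd (by norm_num) h'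
    omega
  have h2 : (2 : ZMod p) ≠ 0 := by
    intro h
    have h' : ((2 : ℕ) : ZMod p) = 0 := by exact_mod_cast h
    rw [ZMod.natCast_eq_zero_iff] at h'
    have := Nat.le_of_dvd (by norm_num) h'
    omega
  have hex : ∃ m, 1 ≤ m ∧ ((3 : ZMod p) ^ m = 1 ∨ (3 : ZMod p) ^ m = -1) :=
    ⟨p - 1, by omega, Or.inl (ZMod.pow_card_sub_one_eq_one h3)⟩
  obtain ⟨hm1, hm⟩ := Nat.find_spec hex
  have hmin : ∀ k, k < Nat.find hex → 1 ≤ k → ¬ ((3 : ZMod p) ^ k = 1 ∨ (3 : ZMod p) ^ k = -1) :=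
    fun k hk h1 h => Nat.find_min hex hk ⟨h1, h⟩
  generalize Nat.find hex = m at *
  have haux : ∀ i k, i < k → k < m → ¬ ((3 : ZMod p) ^ i = 3 ^ k ∨ (3 : ZMod p) ^ i = - 3 ^ k) := by
    intro i k hik hkm h
    apply hmin (k - i) (by omega) (by omega)
    have hk : (3 : ZMod p) ^ k = 3 ^ i * 3 ^ (k - i) := by rw [← pow_add]; congr 1; omega
    have hi : (3 : ZMod p) ^ i ≠ 0 := pow_ne_zero _ h3
    rw [hk] at h
    rcases h with h | h
    · left
      apply mul_left_cancel₀ hi; rw [← h, mul_one]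
    · right
      apply mul_left_cancel₀ hi
      linear_combination h
  let f : ℕ → ZMod p := fun k => 3 ^ k * a
  have hinj : Set.InjOn f (Finset.range m : Finset ℕ) := by
    intro i hi k hk hik
    have h' : (3 : ZMod p) ^ i = 3 ^ k := mul_right_cancel₀ ha0 hik
    simp at hi hk
    rcases lt_trichotomy i k with h | h | h
    · exact absurd (Or.inl h') (haux i k h hk)
    · exact h
    · exact absurd (Or.inl h'.symm) (haux k i h hi)
  let U := (Finset.range m).image f
  have hU : U.card = m := by rw [Finset.card_image_of_injOn hinj, Finset.card_range]
  have hUA : U ⊆ A := by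
    intro x hx
    obtain ⟨k, _, rfl⟩ := Finset.mem_image.1 hx
    exact hall k
  have hVA : U.image (fun x => -x) ⊆ A := by
    intro x hx
    obtain ⟨u, hu, rfl⟩ := Finset.mem_image.1 hx
    exact hneg _ (hUA hu)
  have hV : (U.image (fun x => -x)).card = m := by
    rw [Finset.card_image_of_injective _ neg_injective, hU]
  have hdisj : Disjoint U (U.image (fun x => -x)) := by
    rw [Finset.disjoint_left]
    intro x hx hx'
    obtain ⟨u, hu, rfl⟩ := Finset.mem_image.1 hx'
    obtain ⟨i, hi, hiu⟩ := Finset.mem_image.1 hx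
    obtain ⟨k, hk, rfl⟩ := Finset.mem_image.1 hu
    simp only [Finset.mem_range] at hi hk
    have h' : (3 : ZMod p) ^ i = - 3 ^ k := by
      apply mul_right_cancel₀ ha0
      simp only [f] at hiu
      rw [hiu]; ring
    rcases lt_trichotomy i k with h | h | h
    · exact absurd (Or.inr h') (haux i k h hk)
    · subst h
      have : (2 : ZMod p) * 3 ^ i = 0 := by linear_combination h'
      exact (mul_ne_zero h2 (pow_ne_zero _ h3)) this
    · exact absurd (Or.inr (by rw [h', neg_neg])) (haux k i h hi)
  have hc : 2 * m ≤ A.card := by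
    have := Finset.card_le_card (Finset.union_subset hUA hVA)
    rw [Finset.card_union_of_disjoint hdisj, hU, hV] at this
    omega
  have hle := hpow m hc
  have h3m : 3 ≤ 3 ^ m := by
    calc 3 = 3 ^ 1 := rfl
      _ ≤ 3 ^ m := Nat.pow_le_pow_right (by norm_num) hm1
  have h3odd : 3 ^ m % 2 = 1 := by rw [Nat.pow_mod]; simp
  rcases hm with h | h
  · have h' : ((3 ^ m - 1 : ℕ) : ZMod p) = 0 := by
      rw [Nat.cast_sub (by omega)]; push_cast; rw [h]; ring
    rw [ZMod.natCast_eq_zero_iff] at h'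
    have := Nat.le_of_dvd (by omega) h'
    omega
  · have h' : ((3 ^ m + 1 : ℕ) : ZMod p) = 0 := by
      push_cast; rw [h]; ring
    rw [ZMod.natCast_eq_zero_iff] at h'
    obtain ⟨c, hc⟩ := h'
    have hc2 : c < 2 := by
      by_contra hcc
      have : p * 2 ≤ p * c := Nat.mul_le_mul_left _ (by omega)
      omega
    interval_cases c <;> omega

lemma main_aux {p : ℕ} [Fact p.Prime] (h5 : 5 ≤ p) (A : Finset (ZMod p)) (hA : A.Nonempty)
    (hneg : ∀ a ∈ A, -a ∈ A) (hpow : ∀ n, 2 * n ≤ A.card → 3 ^ n ≤ p)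
    (hno : ∀ a ∈ A, ∃ b ∈ A, ∃ c ∈ A, b + c = 2 * a ∧ b ≠ a) : False := by
  classical
  have h3 : (3 : ZMod p) ≠ 0 := by
    intro h
    have h' : ((3 : ℕ) : ZMod p) = 0 := by exact_mod_cast h
    rw [ZMod.natCast_eq_zero_iff] at h'
    have := Nat.le_of_dvd (by norm_num) h'
    omega
  have h2 : (2 : ZMod p) ≠ 0 := by
    intro h
    have h' : ((2 : ℕ) : ZMod p) = 0 := by exact_mod_cast h
    rw [ZMod.natCast_eq_zero_iff] at h'
    have := Nat.le_of_dvd (by norm_num) h'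
    omega
  have hnegiff : ∀ a, -a ∈ A ↔ a ∈ A := fun a =>
    ⟨fun h => by simpa using hneg _ h, hneg a⟩
  let s : ZMod p → ℕ := fun b => sInf {k | 3 ^ (k + 1) * b ∉ A}
  have hsne : ∀ b ∈ A, b ≠ 0 → {k | 3 ^ (k + 1) * b ∉ A}.Nonempty := by
    intro b hb hb0
    by_contra h
    rw [Set.not_nonempty_iff_eq_empty, Set.eq_empty_iff_forall_notMem] at h
    refine no_cycle h5 A hneg hpow b hb0 fun k => ?_
    cases k with
    | zero => simpa using hb
    | succ k => simpa using h k
  have hs1 : ∀ b ∈ A, b ≠ 0 → 3 ^ (s b + 1) * b ∉ A := fun b hb hb0 =>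
    Nat.sInf_mem (hsne b hb hb0)
  have hs2 : ∀ b ∈ A, ∀ k ≤ s b, 3 ^ k * b ∈ A := by
    intro b hb k hk
    cases k with
    | zero => simpa using hb
    | succ k =>
      have := Nat.notMem_of_lt_sInf (show k < sInf {k | 3 ^ (k + 1) * b ∉ A} from hk)
      simpa using this
  have hsuniq : ∀ b ∈ A, b ≠ 0 → ∀ n, 3 ^ (n + 1) * b ∉ A → (∀ k ≤ n, 3 ^ k * b ∈ A) → s b = n := by
    intro b hb hb0 n hn hk
    apply le_antisymm
    · exact Nat.sInf_le hn
    · by_contra h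
      exact hs1 b hb hb0 (hk _ (by omega))
  have hsneg : ∀ b, s (-b) = s b := by
    intro b
    simp only [s, mul_neg, hnegiff]
  have hsmul : ∀ b ∈ A, b ≠ 0 → ∀ k ≤ s b, s (3 ^ k * b) = s b - k := by
    intro b hb hb0 k hk
    apply hsuniq _ (hs2 b hb k hk) (mul_ne_zero (pow_ne_zero _ h3) hb0)
    · rw [← mul_assoc, ← pow_add]
      have : s b - k + 1 + k = s b + 1 := by omega
      rw [this]; exact hs1 b hb hb0
    · intro l hl
      rw [← mul_assoc, ← pow_add]
      exact hs2 b hb _ (by omega)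
  let ρ : ZMod p → ZMod p := fun b => 3 ^ s b * b
  have hρneg : ∀ b, ρ (-b) = - ρ b := fun b => by simp only [ρ, hsneg]; ring
  let F : ZMod p → Finset (ZMod p) := fun t => A.filter (fun b => b ≠ 0 ∧ ρ b = t)
  have hF : ∀ b ∈ A, b ≠ 0 → s b + 1 ≤ (F (ρ b)).card := by
    intro b hb hb0
    have hinj : Set.InjOn (fun k => 3 ^ k * b) (Finset.range (s b + 1) : Finset ℕ) := by
      intro i hi k hk hik
      simp only [Finset.coe_range, Set.mem_Iio] at hi hk
      have e1 := hsmul b hb hb0 i (by omega)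
      have e2 := hsmul b hb hb0 k (by omega)
      simp only at hik
      rw [hik, e2] at e1
      omega
    have := Finset.card_image_of_injOn hinj
    rw [Finset.card_range] at this
    rw [← this]
    apply Finset.card_le_card
    intro x hx
    obtain ⟨k, hk, rfl⟩ := Finset.mem_image.1 hx
    have hk' : k ≤ s b := by have := Finset.mem_range.1 hk; omega
    refine Finset.mem_filter.2 ⟨hs2 b hb k hk', mul_ne_zero (pow_ne_zero _ h3) hb0, ?_⟩
    simp only [ρ]
    rw [hsmul b hb hb0 k hk', ← mul_assoc, ← pow_add]
    congr 2; omega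
  let I : Finset (ZMod p) := A.filter (fun a => a ≠ 0 ∧ 3 * a ∉ A ∧ a.val < (-a).val)
  have hroot : ∀ b ∈ A, b ≠ 0 → ∃ t ∈ I, ∃ ε : ℤ, |ε| = 1 ∧ (ε : ZMod p) * t = 3 ^ s b * b ∧
      s b + 1 ≤ (F t).card ∧ (b = t ∨ b = -t ∨ 1 ≤ s b) := by
    intro b hb hb0
    have hr : ρ b ∈ A := hs2 b hb _ le_rfl
    have hr0 : ρ b ≠ 0 := mul_ne_zero (pow_ne_zero _ h3) hb0
    have hr3 : 3 * ρ b ∉ A := by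
      have := hs1 b hb hb0
      rwa [pow_succ', mul_assoc] at this
    have hs0 : s b = 0 → ρ b = b := fun h => by simp [ρ, h]
    have hne : (ρ b).val ≠ (-ρ b).val := by
      intro h
      have h' := ZMod.val_injective p h
      have : 2 * ρ b = 0 := by linear_combination h'
      exact mul_ne_zero h2 hr0 this
    rcases lt_or_gt_of_ne hne with h | h
    · refine ⟨ρ b, Finset.mem_filter.2 ⟨hr, hr0, hr3, h⟩, 1, by simp, by simp [ρ], hF b hb hb0, ?_⟩
      by_cases h0 : s b = 0
      · left; exact (hs0 h0).symm
      · right; right; omega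
    · refine ⟨-ρ b, Finset.mem_filter.2 ⟨hneg _ hr, neg_ne_zero.2 hr0, ?_, ?_⟩, -1, by simp,
        by simp [ρ], ?_, ?_⟩
      · rw [mul_neg, hnegiff]; exact hr3
      · rw [neg_neg]; exact h
      · have := hF (-b) (hneg b hb) (neg_ne_zero.2 hb0)
        rwa [hsneg, hρneg] at this
      · by_cases h0 : s b = 0
        · right; left; rw [neg_neg]; exact (hs0 h0).symm
        · right; right; omega
  have hIne : I.Nonempty := by
    obtain ⟨a, ha⟩ := hA
    have : ∃ b ∈ A, b ≠ 0 := by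
      by_cases h : a = 0
      · obtain ⟨b, hb, _, _, _, hba⟩ := hno a ha
        exact ⟨b, hb, by rwa [h] at hba⟩
      · exact ⟨a, ha, h⟩
    obtain ⟨b, hb, hb0⟩ := this
    obtain ⟨t, ht, _⟩ := hroot b hb hb0
    exact ⟨t, ht⟩
  have hI : ∀ t ∈ I, s t = 0 := by
    intro t ht
    obtain ⟨htA, ht0, ht3, _⟩ := Finset.mem_filter.1 ht
    exact hsuniq t htA ht0 0 (by simpa using ht3) (by
      intro k hk
      obtain rfl : k = 0 := by omega
      simpa using htA)
  have hFpos : ∀ t ∈ I, 1 ≤ (F t).card := by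
    intro t ht
    obtain ⟨htA, ht0, ht3, _⟩ := Finset.mem_filter.1 ht
    have := hF t htA ht0
    have e : ρ t = t := by simp [ρ, hI t ht]
    rw [e, hI t ht] at this
    exact this
  have hcount : 2 * ∑ t ∈ I, (F t).card ≤ A.card := by
    let U := I.biUnion F
    have hUc : U.card = ∑ t ∈ I, (F t).card := by
      apply Finset.card_biUnion
      intro t _ t' _ htt'
      change Disjoint (F t) (F t')
      rw [Finset.disjoint_left]
      intro x hx hx'
      exact htt' ((Finset.mem_filter.1 hx).2.2.symm.trans (Finset.mem_filter.1 hx').2.2)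
    have hUA : U ⊆ A := by
      intro x hx
      obtain ⟨t, _, hx⟩ := Finset.mem_biUnion.1 hx
      exact (Finset.mem_filter.1 hx).1
    have hVA : U.image (fun x => -x) ⊆ A := by
      intro x hx
      obtain ⟨u, hu, rfl⟩ := Finset.mem_image.1 hx
      exact hneg _ (hUA hu)
    have hV : (U.image (fun x => -x)).card = U.card :=
      Finset.card_image_of_injective _ neg_injective
    have hdisj : Disjoint U (U.image (fun x => -x)) := by
      rw [Finset.disjoint_left]
      intro x hx hx'
      obtain ⟨u, hu, rfl⟩ := Finset.mem_image.1 hx'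
      obtain ⟨t, ht, hxt⟩ := Finset.mem_biUnion.1 hx
      obtain ⟨t', ht', hut⟩ := Finset.mem_biUnion.1 hu
      have e1 := (Finset.mem_filter.1 hxt).2.2
      have e2 := (Finset.mem_filter.1 hut).2.2
      rw [hρneg, e2] at e1
      have l1 := (Finset.mem_filter.1 ht).2.2.2
      have l2 := (Finset.mem_filter.1 ht').2.2.2
      rw [← e1, neg_neg] at l1
      omega
    have := Finset.card_le_card (Finset.union_subset hUA hVA)
    rw [Finset.card_union_of_disjoint hdisj, hV, hUc] at this
    omega
  have hp3 := hpow _ hcount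
  have : Nonempty I := hIne.to_subtype
  let d : I → ℕ := fun t => 3 ^ ((F t).card - 1)
  have hd : ∀ t, 0 < d t := fun t => by positivity
  have hdz : ∀ t, (d t : ZMod p) ≠ 0 := fun t => by
    simp only [d, Nat.cast_pow]; exact pow_ne_zero _ h3
  let y : I → ZMod p := fun t => (t : ZMod p) / d t
  have hy : ∀ t : I, (d t : ZMod p) * y t = t := fun t => mul_div_cancel₀ _ (hdz t)
  have hpd : 3 ^ Fintype.card I * ∏ t, d t ≤ p := by
    refine le_trans (le_of_eq ?_) hp3
    rw [← Finset.prod_pow_eq_pow_sum, ← Finset.prod_coe_sort I]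
    have : 3 ^ Fintype.card I = ∏ _t : I, 3 := by simp
    rw [this, ← Finset.prod_mul_distrib]
    refine Finset.prod_congr rfl fun t _ => ?_
    simp only [d]
    rw [← pow_succ']
    congr 1
    have := hFpos t t.2
    omega
  have hcoef : ∀ b ∈ A, ∃ t : I, ∃ x : ℤ, (x : ZMod p) * y t = b ∧ |x| ≤ d t ∧
      (b ≠ t → b ≠ -t → 3 * |x| ≤ d t) := by
    intro b hb
    by_cases hb0 : b = 0
    · obtain ⟨t⟩ := this
      refine ⟨t, 0, by simp [hb0], by simp, by simp⟩
    · obtain ⟨t, ht, ε, hε, hεt, hsF, hor⟩ := hroot b hb hb0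
      obtain ⟨m, hm⟩ := Nat.exists_eq_add_of_le hsF
      have hdt : d ⟨t, ht⟩ = 3 ^ (s b + m) := by
        simp only [d]; congr 1; omega
      refine ⟨⟨t, ht⟩, ε * 3 ^ m, ?_, ?_, ?_⟩
      · apply mul_left_cancel₀ (pow_ne_zero (s b) h3)
        have h1 := hy ⟨t, ht⟩
        rw [hdt] at h1
        push_cast at h1 ⊢
        rw [← hεt]
        rw [pow_add] at h1
        linear_combination (ε : ZMod p) * h1
      · rw [abs_mul, hε, one_mul, abs_of_pos (by positivity), hdt]
        push_cast
        exact pow_le_pow_right₀ (by norm_num) (by omega)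
      · intro hb1 hb2
        have hsb : 1 ≤ s b := by
          rcases hor with h | h | h
          · exact absurd h hb1
          · exact absurd h hb2
          · exact h
        rw [abs_mul, hε, one_mul, abs_of_pos (by positivity), hdt, ← pow_succ']
        push_cast
        exact pow_le_pow_right₀ (by norm_num) (by omega)
  have hrow : ∀ t : I, ∃ b ∈ A, ∃ c ∈ A, b + c = 2 * (t : ZMod p) ∧ b ≠ t ∧ b ≠ -t ∧ c ≠ t ∧ c ≠ -t := by
    intro t
    obtain ⟨htA, ht0, ht3, _⟩ := Finset.mem_filter.1 t.2
    obtain ⟨b, hb, c, hc, hbc, hbt⟩ := hno t htA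
    refine ⟨b, hb, c, hc, hbc, hbt, ?_, ?_, ?_⟩
    · rintro rfl
      apply ht3
      have : c = 3 * (t : ZMod p) := by linear_combination hbc
      rwa [← this]
    · rintro rfl
      apply hbt; linear_combination hbc
    · rintro rfl
      apply ht3
      have : b = 3 * (t : ZMod p) := by linear_combination hbc
      rwa [← this]
  choose b hb c hc hbc hb1 hb2 hc1 hc2 using hrow
  choose j x hx1 hx2 hx3 using fun t => hcoef (b t) (hb t)
  choose k z hz1 hz2 hz3 using fun t => hcoef (c t) (hc t)
  obtain ⟨t, ht⟩ := key2 d hd y hpd j k x z hx2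
    (fun t ht => hx3 t (by rw [ht]; exact hb1 t) (by rw [ht]; exact hb2 t)) hz2
    (fun t ht => hz3 t (by rw [ht]; exact hc1 t) (by rw [ht]; exact hc2 t))
    (fun t => by rw [hx1, hz1, hbc, mul_assoc, hy])
  rw [hx1, hy] at ht
  exact hb1 t ht

/-- For every prime `p`, every nonempty symmetric subset `A` of `𝔽_p` with
`|A| ≤ 2·log₃(p)` has a unique difference, i.e. `g(p) ≥ 2 log₃ p`. -/
theorem g_ge_two_log_three (p : ℕ) (hp : p.Prime)
    (A : Finset (ZMod p)) (hA : A.Nonempty) (hsym : A = -A)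
    (hcard : (A.card : ℝ) ≤ 2 * Real.logb 3 p) :
    HasUniqueDifference A := by
  have : Fact p.Prime := ⟨hp⟩
  have hpow : ∀ n, 2 * n ≤ A.card → 3 ^ n ≤ p := by
    intro n hn
    have h1 : (2 * n : ℝ) ≤ A.card := by exact_mod_cast hn
    have h2 : (n : ℝ) ≤ Real.logb 3 p := by linarith
    rw [Real.le_logb_iff_rpow_le (by norm_num) (by exact_mod_cast hp.pos)] at h2
    rw [Real.rpow_natCast] at h2
    exact_mod_cast h2
  have hneg : ∀ a ∈ A, -a ∈ A := by
    intro a ha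
    rw [hsym]
    exact Finset.neg_mem_neg ha
  by_cases h5 : 5 ≤ p
  · by_contra hun
    refine main_aux h5 A hA hneg hpow fun a ha => ?_
    unfold HasUniqueDifference at hun
    push Not at hun
    have h1 := hun (2 * a)
    have hmem : (a, -a) ∈ (A ×ˢ A).filter fun ab => ab.1 - ab.2 = 2 * a := by
      simp [ha, hneg a ha]; ring
    have hlt : 1 < ((A ×ˢ A).filter fun ab => ab.1 - ab.2 = 2 * a).card := by
      have := Finset.card_pos.2 ⟨_, hmem⟩
      omega
    obtain ⟨⟨b, c⟩, hbc, hne⟩ := Finset.exists_mem_ne hlt (a, -a)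
    simp only [Finset.mem_filter, Finset.mem_product] at hbc
    obtain ⟨⟨hb, hc⟩, hbc⟩ := hbc
    refine ⟨b, hb, -c, hneg c hc, by rw [← hbc]; ring, ?_⟩
    rintro rfl
    apply hne
    have : c = -b := by linear_combination -hbc
    rw [this]
  · have hp2 := hp.two_le
    have hp4 : p ≠ 4 := by rintro rfl; revert hp; decide
    obtain rfl | rfl : p = 2 ∨ p = 3 := by omega
    · have hc : A.card ≤ 1 := by
        by_contra h
        have := hpow 1 (by omega)
        omega
      clear hcard hpow hneg
      unfold HasUniqueDifference
      revert A
      decide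
    · have hc : A.card ≤ 2 := by
        by_contra h
        have h' : A.card ≤ 3 := by
          have := Finset.card_le_univ A
          simpa [ZMod.card] using this
        have h3 : A.card = 3 := by omega
        have h4 : (3 : ℝ) ≤ 2 * Real.logb 3 3 := by
          rw [h3] at hcard; exact_mod_cast hcard
        rw [Real.logb_self_eq_one (by norm_num)] at h4
        norm_num at h4
      clear hcard hpow hneg
      unfold HasUniqueDifference
      revert A
      decide
end

section
/- For every ε > 0 there exists a constant C(ε) such that for every prime p > C(ε) there exists a nonempty symmetric subset A of 𝔽_p with |A| ≤ (2+ε)·log₃(p) which has no unique difference. (In the paper's notation: g(p) ≤ (2+ε)·log₃(p) for all primes p > C(ε).) -/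
open Finset Pointwise

/-- Descending chain of naturals with ratio mostly `3`. -/
lemma chain_exists (m : ℕ) (hm : 1 ≤ m) (R : ℕ) (hR : R = 2 * 3 ^ m) (T : ℕ) (hT : 1 ≤ T) :
    ∃ B : Finset ℕ, T ∈ B ∧ (∀ b ∈ B, 1 ≤ b ∧ b ≤ T) ∧ (∃ b ∈ B, b ≤ R) ∧
      B.card ≤ (m + 1) * Nat.log (3 ^ m) T + 1 ∧
      ∀ b ∈ B, b ≠ T → ∃ c ∈ B, b < c ∧ (c = 3 * b ∨ (2 * b ≤ c ∧ c ≤ 2 * b + R)) := by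
  induction T using Nat.strong_induction_on with
  | _ T ih =>
    by_cases hTR : T ≤ R
    · refine ⟨{T}, by simp, by simpa using hT, ⟨T, by simp, hTR⟩, by simp, ?_⟩
      intro b hb hbT
      exact absurd (by simpa using hb) hbT
    · have hpow : 0 < 3 ^ m := by positivity
      have hpow1 : 1 < 3 ^ m := Nat.one_lt_pow (by omega) (by omega)
      obtain ⟨T', hT'⟩ : ∃ T', T' = T / (2 * 3 ^ m) := ⟨_, rfl⟩
      have hdm := Nat.div_add_mod T (2 * 3 ^ m)
      have hml := Nat.mod_lt T (show 0 < 2 * 3 ^ m by omega)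
      rw [← hT'] at hdm
      have h1 : 1 ≤ T' := by
        rw [hT', Nat.one_le_div_iff (by omega)]; omega
      have hlo : 2 * (3 ^ m * T') ≤ T := by rw [← mul_assoc]; omega
      have hhi : T ≤ 2 * (3 ^ m * T') + R := by rw [← mul_assoc]; omega
      have hle : T' ≤ 3 ^ m * T' := Nat.le_mul_of_pos_left _ hpow
      have hlt : T' < T := by omega
      obtain ⟨B, hTB, hB, hs, hc, hch⟩ := ih T' hlt h1
      have hlog : Nat.log (3 ^ m) T' + 1 ≤ Nat.log (3 ^ m) T := by
        rw [← Nat.log_mul_base hpow1 (by omega)]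
        apply Nat.log_mono_right
        rw [mul_comm]; omega
      have hpm : ∀ j ≤ m, T' ≤ 3 ^ j * T' ∧ 3 ^ j * T' ≤ 3 ^ m * T' := by
        intro j hj
        refine ⟨Nat.le_mul_of_pos_left _ (by positivity), ?_⟩
        exact Nat.mul_le_mul_right _ (Nat.pow_le_pow_right (by omega) hj)
      have key : ∀ j ≤ m, ∃ c ∈ insert T (B ∪ (Finset.Icc 1 m).image (fun j => 3 ^ j * T')),
          3 ^ j * T' < c ∧ (c = 3 * (3 ^ j * T') ∨
            (2 * (3 ^ j * T') ≤ c ∧ c ≤ 2 * (3 ^ j * T') + R)) := by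
        intro j hj
        have := hpm j hj
        rcases hj.lt_or_eq with h | h
        · refine ⟨3 ^ (j + 1) * T', ?_, ?_, Or.inl (by ring)⟩
          · refine Finset.mem_insert_of_mem (Finset.mem_union_right _ ?_)
            exact Finset.mem_image.2 ⟨j + 1, Finset.mem_Icc.2 ⟨by omega, by omega⟩, rfl⟩
          · have : 3 ^ (j + 1) * T' = 3 * (3 ^ j * T') := by ring
            omega
        · subst h
          exact ⟨T, Finset.mem_insert_self _ _, by omega, Or.inr ⟨hlo, hhi⟩⟩
      refine ⟨insert T (B ∪ (Finset.Icc 1 m).image (fun j => 3 ^ j * T')),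
        Finset.mem_insert_self _ _, ?_, ?_, ?_, ?_⟩
      · intro b hb
        rcases Finset.mem_insert.1 hb with rfl | hb
        · omega
        rcases Finset.mem_union.1 hb with hb | hb
        · have := hB b hb; omega
        · obtain ⟨j, hj, rfl⟩ := Finset.mem_image.1 hb
          have := hpm j (Finset.mem_Icc.1 hj).2
          omega
      · obtain ⟨b, hb, hb'⟩ := hs
        exact ⟨b, Finset.mem_insert_of_mem (Finset.mem_union_left _ hb), hb'⟩
      · have e1 := Finset.card_insert_le T (B ∪ (Finset.Icc 1 m).image (fun j => 3 ^ j * T'))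
        have e2 := Finset.card_union_le B ((Finset.Icc 1 m).image (fun j => 3 ^ j * T'))
        have e3 : ((Finset.Icc 1 m).image (fun j => 3 ^ j * T')).card ≤ m :=
          Finset.card_image_le.trans (by simp)
        have e4 := Nat.mul_le_mul_left (m + 1) hlog
        rw [mul_add] at e4
        omega
      · intro b hb hbT
        rcases Finset.mem_insert.1 hb with h | hb
        · exact absurd h hbT
        rcases Finset.mem_union.1 hb with hb | hb
        · by_cases hbT' : b = T'
          · subst hbT'
            simpa using key 0 (by omega)
          · obtain ⟨c, hc, h⟩ := hch b hb hbT'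
            exact ⟨c, Finset.mem_insert_of_mem (Finset.mem_union_left _ hc), h⟩
        · obtain ⟨j, hj, rfl⟩ := Finset.mem_image.1 hb
          exact key j (Finset.mem_Icc.1 hj).2

/-- A symmetric integer set, each of whose elements is a midpoint mod `p`. -/
lemma int_set_exists (m : ℕ) (hm : 1 ≤ m) (T : ℕ) (hT : 2 * 3 ^ m < T) :
    ∃ S : Finset ℤ, 0 ∈ S ∧ (∀ x ∈ S, -x ∈ S) ∧ (∀ x ∈ S, |x| ≤ T) ∧
      S.card ≤ 4 * 3 ^ m + 3 + 2 * ((m + 1) * Nat.log (3 ^ m) T) ∧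
      ∀ x ∈ S, ∃ c ∈ S, ∃ d ∈ S, c ≠ x ∧ ((2 * T + 1 : ℕ) : ℤ) ∣ 2 * x - (c + d) := by
  obtain ⟨R, hR⟩ : ∃ R, R = 2 * 3 ^ m := ⟨_, rfl⟩
  have hpow : 0 < 3 ^ m := by positivity
  obtain ⟨B, hTB, hB, ⟨b0, hb0, hb0R⟩, hc, hch⟩ := chain_exists m hm R hR T (by omega)
  obtain ⟨S, hS⟩ : ∃ S : Finset ℤ, S = Finset.Icc (-(R : ℤ)) R ∪
    (B.image (fun b : ℕ => (b : ℤ)) ∪ B.image (fun b : ℕ => -(b : ℤ))) := ⟨_, rfl⟩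
  have mem : ∀ x, x ∈ S ↔ (-(R : ℤ) ≤ x ∧ x ≤ R) ∨ (∃ b ∈ B, (b : ℤ) = x) ∨
      (∃ b ∈ B, -(b : ℤ) = x) := by
    intro x; simp [hS]
  have hneg : ∀ x ∈ S, -x ∈ S := by
    intro x hx
    rw [mem] at hx ⊢
    rcases hx with h | ⟨b, hb, h⟩ | ⟨b, hb, h⟩
    · left; omega
    · right; right; exact ⟨b, hb, by omega⟩
    · right; left; exact ⟨b, hb, by omega⟩
  have hy : ∃ y ∈ B, R < y ∧ y ≤ 3 * R := by
    have hne : (B.filter (· ≤ R)).Nonempty := ⟨b0, by simp [hb0, hb0R]⟩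
    obtain ⟨b, hb, hmax⟩ := Finset.exists_max_image _ id hne
    simp only [Finset.mem_filter, id] at hb hmax
    obtain ⟨c, hcB, hbc, h⟩ := hch b hb.1 (by omega)
    refine ⟨c, hcB, ?_, by omega⟩
    by_contra hcon
    have := hmax c ⟨hcB, by omega⟩
    omega
  have memI : ∀ x : ℤ, -(R : ℤ) ≤ x → x ≤ R → x ∈ S := fun x h1 h2 => (mem x).2 (Or.inl ⟨h1, h2⟩)
  have memB : ∀ b ∈ B, (b : ℤ) ∈ S := fun b hb => (mem _).2 (Or.inr (Or.inl ⟨b, hb, rfl⟩))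
  have main : ∀ x ∈ S, 0 ≤ x →
      ∃ c ∈ S, ∃ d ∈ S, c ≠ x ∧ ((2 * T + 1 : ℕ) : ℤ) ∣ 2 * x - (c + d) := by
    intro x hx hx0
    by_cases h1 : x < R
    · exact ⟨x + 1, memI _ (by omega) (by omega), x - 1, memI _ (by omega) (by omega), by omega,
        ⟨0, by ring⟩⟩
    by_cases h2 : x = R
    · obtain ⟨y, hyB, hy1, hy2⟩ := hy
      exact ⟨y, memB y hyB, 2 * R - y, memI _ (by omega) (by omega), by omega,
        ⟨0, by rw [h2]; ring⟩⟩
    have : ∃ b ∈ B, (b : ℤ) = x := by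
      rcases (mem x).1 hx with h | h | ⟨b, hb, h⟩
      · omega
      · exact h
      · omega
    obtain ⟨b, hb, rfl⟩ := this
    by_cases hbT : b = T
    · refine ⟨-1, memI _ (by omega) (by omega), 0, memI _ (by omega) (by omega), by omega, 1, ?_⟩
      subst hbT; push_cast; ring
    · obtain ⟨c, hcB, hbc, h⟩ := hch b hb hbT
      rcases h with h | h
      · exact ⟨c, memB c hcB, -b, hneg _ hx, by omega, ⟨0, by subst h; push_cast; ring⟩⟩
      · exact ⟨c, memB c hcB, 2 * b - c, memI _ (by omega) (by omega), by omega, ⟨0, by ring⟩⟩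
  refine ⟨S, memI _ (by omega) (by omega), hneg, ?_, ?_, ?_⟩
  · intro x hx
    rw [abs_le]
    rcases (mem x).1 hx with h | ⟨b, hb, h⟩ | ⟨b, hb, h⟩
    · omega
    · have := hB b hb; omega
    · have := hB b hb; omega
  · have e1 := Finset.card_union_le (Finset.Icc (-(R : ℤ)) R)
      (B.image (fun b : ℕ => (b : ℤ)) ∪ B.image (fun b : ℕ => -(b : ℤ)))
    have e2 := Finset.card_union_le (B.image (fun b : ℕ => (b : ℤ)))
      (B.image (fun b : ℕ => -(b : ℤ)))
    have e3 : (B.image (fun b : ℕ => (b : ℤ))).card ≤ B.card := Finset.card_image_le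
    have e4 : (B.image (fun b : ℕ => -(b : ℤ))).card ≤ B.card := Finset.card_image_le
    have e5 : (Finset.Icc (-(R : ℤ)) R).card = 2 * R + 1 := by
      rw [Int.card_Icc]; omega
    rw [← hS] at e1
    omega
  · intro x hx
    rcases le_total 0 x with h | h
    · exact main x hx h
    · obtain ⟨c, hc, d, hd, hne, k, hk⟩ := main (-x) (hneg x hx) (by omega)
      exact ⟨-c, hneg c hc, -d, hneg d hd, by omega, -k, by linarith⟩

lemma zmod_set_exists (m : ℕ) (hm : 1 ≤ m) (T : ℕ) (hT : 2 * 3 ^ m < T) :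
    ∃ A : Finset (ZMod (2 * T + 1)), A.Nonempty ∧ A = -A ∧
      A.card ≤ 4 * 3 ^ m + 3 + 2 * ((m + 1) * Nat.log (3 ^ m) T) ∧ ¬ HasUniqueDifference A := by
  obtain ⟨S, h0, hneg, habs, hcard, hmid⟩ := int_set_exists m hm T hT
  have hA : ∀ a ∈ S.image (fun x : ℤ => (x : ZMod (2 * T + 1))),
      -a ∈ S.image (fun x : ℤ => (x : ZMod (2 * T + 1))) := by
    intro a ha
    obtain ⟨x, hx, rfl⟩ := Finset.mem_image.1 ha
    exact Finset.mem_image.2 ⟨-x, hneg x hx, by push_cast; rfl⟩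
  refine ⟨S.image (fun x : ℤ => (x : ZMod (2 * T + 1))), ⟨_, Finset.mem_image_of_mem _ h0⟩, ?_,
    Finset.card_image_le.trans hcard, ?_⟩
  · ext a
    rw [Finset.mem_neg']
    exact ⟨hA a, fun h => by simpa using hA _ h⟩
  · rintro ⟨z, hz⟩
    obtain ⟨⟨a, b⟩, hab⟩ := Finset.card_eq_one.1 hz
    have memf : ∀ u v, u ∈ S.image (fun x : ℤ => (x : ZMod (2 * T + 1))) →
        v ∈ S.image (fun x : ℤ => (x : ZMod (2 * T + 1))) → u - v = z → u = a ∧ v = b := by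
      intro u v hu hv huv
      have : (u, v) ∈ ({(a, b)} : Finset (ZMod (2 * T + 1) × ZMod (2 * T + 1))) := by
        rw [← hab]
        exact Finset.mem_filter.2 ⟨Finset.mk_mem_product hu hv, huv⟩
      simpa using this
    have hin := Finset.mem_singleton_self (a, b)
    rw [← hab] at hin
    obtain ⟨hin, hd⟩ := Finset.mem_filter.1 hin
    obtain ⟨ha, hb⟩ := Finset.mem_product.1 hin
    simp only at ha hb hd
    have h1 := memf (-b) (-a) (hA _ hb) (hA _ ha) (by rw [← hd]; ring)
    obtain ⟨x, hx, hxa⟩ := Finset.mem_image.1 ha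
    obtain ⟨c, hc, d, hd', hne, hdvd⟩ := hmid x hx
    have h2 := (ZMod.intCast_eq_intCast_iff_dvd_sub (c + d) (2 * x) (2 * T + 1)).2 hdvd
    have h3 := memf (c : ZMod (2 * T + 1)) (-(d : ZMod (2 * T + 1)))
      (Finset.mem_image_of_mem _ hc) (hA _ (Finset.mem_image_of_mem _ hd')) (by
        push_cast at h2
        rw [sub_neg_eq_add, h2, ← hd, ← h1.2]
        rw [hxa]; ring)
    have h4 : ((x : ℤ) : ZMod (2 * T + 1)) = c := by rw [h3.1, ← hxa]
    have h5 := (ZMod.intCast_eq_intCast_iff_dvd_sub x c (2 * T + 1)).1 h4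
    have hcT := abs_le.1 (habs c hc)
    have hxT := abs_le.1 (habs x hx)
    have h6 := Int.eq_zero_of_abs_lt_dvd h5 (by rw [abs_lt]; push_cast; omega)
    omega

/-- For every `ε > 0` there is a constant `C(ε)` such that for every prime `p > C(ε)`
there exists a nonempty symmetric subset of `𝔽_p` of size at most `(2+ε)·log₃(p)`
with no unique difference, i.e. `g(p) ≤ (2+ε) log₃ p` for large `p`. -/
theorem g_le_two_plus_eps_log_three (ε : ℝ) (hε : 0 < ε) :
    ∃ C : ℝ, ∀ p : ℕ, p.Prime → (p : ℝ) > C →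
      ∃ A : Finset (ZMod p), A.Nonempty ∧ A = -A ∧
        (A.card : ℝ) ≤ (2 + ε) * Real.logb 3 p ∧ ¬ HasUniqueDifference A := by
  obtain ⟨m, hmε⟩ := exists_nat_gt (max 1 (4 / ε))
  have hm1 : (1 : ℝ) < m := (le_max_left _ _).trans_lt hmε
  have hm2 : 4 / ε < m := (le_max_right _ _).trans_lt hmε
  have hm : 1 ≤ m := by exact_mod_cast hm1.le
  obtain ⟨K, hK⟩ : ∃ K : ℝ, K = 4 * 3 ^ m + 3 := ⟨_, rfl⟩
  refine ⟨max (4 * 3 ^ m + 3) ((3 : ℝ) ^ (2 * K / ε)), ?_⟩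
  intro p hp hpC
  have hp1 : (4 * 3 ^ m + 3 : ℝ) < p := (le_max_left _ _).trans_lt hpC
  have hp2 : (3 : ℝ) ^ (2 * K / ε) < p := (le_max_right _ _).trans_lt hpC
  have hp1' : 4 * 3 ^ m + 3 < p := by exact_mod_cast hp1
  have hppos : (0 : ℝ) < p := by exact_mod_cast hp.pos
  have hKlog : 2 * K / ε ≤ Real.logb 3 p :=
    ((Real.lt_logb_iff_rpow_lt (by norm_num) hppos).2 hp2).le
  obtain ⟨T, rfl⟩ : ∃ T, p = 2 * T + 1 := hp.odd_of_ne_two (by omega)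
  obtain ⟨A, hne, hsym, hcard, hno⟩ := zmod_set_exists m hm T (by omega)
  refine ⟨A, hne, hsym, ?_, hno⟩
  obtain ⟨L, hL⟩ : ∃ L, L = Real.logb 3 ((2 * T + 1 : ℕ) : ℝ) := ⟨_, rfl⟩
  obtain ⟨n, hn⟩ : ∃ n, n = Nat.log (3 ^ m) T := ⟨_, rfl⟩
  rw [← hL] at hKlog ⊢
  rw [← hn] at hcard
  have hmn : (m : ℝ) * n ≤ L := by
    have h1 : (3 ^ m) ^ n ≤ T := by rw [hn]; exact Nat.pow_log_le_self _ (by omega)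
    have h2 : 3 ^ (m * n) ≤ 2 * T + 1 := by rw [pow_mul]; omega
    rw [hL, Real.le_logb_iff_rpow_le (by norm_num) hppos]
    have h3 : ((3 ^ (m * n) : ℕ) : ℝ) ≤ ((2 * T + 1 : ℕ) : ℝ) := Nat.cast_le.2 h2
    have h4 : ((m : ℝ) * n) = ((m * n : ℕ) : ℝ) := by push_cast; rfl
    rw [h4, Real.rpow_natCast]
    simpa using h3
  have hcard' : (A.card : ℝ) ≤ K + 2 * ((m + 1) * n) := by
    rw [hK]; exact_mod_cast hcard
  have hKL : K ≤ ε / 2 * L := by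
    rw [div_le_iff₀ hε] at hKlog; linarith
  have hnL : 2 * (n : ℝ) ≤ ε / 2 * L := by
    rw [div_lt_iff₀ hε] at hm2
    have : (0 : ℝ) ≤ n := Nat.cast_nonneg n
    nlinarith
  nlinarith
end

section
/- Let m ≤ n and let A be an m×n real matrix with rows r₁, …, r_m. Set d(1) = ‖r₁‖ (the Euclidean norm), and for 2 ≤ j ≤ m let d(j) be the Euclidean distance of r_j from the linear subspace of ℝⁿ spanned by r₁, …, r_{j−1}. Then det(A·Aᵀ) = ∏_{j=1}^{m} d(j)². -/
open Finset Matrix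

open InnerProductSpace in
lemma gs_infDist {m n : ℕ} (r : Fin m → EuclideanSpace ℝ (Fin n)) (j : Fin m) :
    Metric.infDist (r j)
        (↑(Submodule.span ℝ (r '' {i | (i : ℕ) < (j : ℕ)})) : Set (EuclideanSpace ℝ (Fin n)))
      = ‖gramSchmidt ℝ r j‖ := by
  have hS : {i : Fin m | (i : ℕ) < (j : ℕ)} = Set.Iio j := by
    ext i; simp
  rw [hS, ← span_gramSchmidt_Iio ℝ r j]
  set V := Submodule.span ℝ (gramSchmidt ℝ r '' Set.Iio j) with hV
  have hp : r j - gramSchmidt ℝ r j ∈ V := by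
    have h := gramSchmidt_def'' ℝ r j
    have h2 : r j - gramSchmidt ℝ r j = ∑ i ∈ Finset.Iio j,
        (inner ℝ (gramSchmidt ℝ r i) (r j) / ((‖gramSchmidt ℝ r i‖ : ℝ)) ^ 2) •
          gramSchmidt ℝ r i := by
      rw [sub_eq_iff_eq_add']
      exact h
    rw [h2]
    refine Submodule.sum_mem _ fun i hi => Submodule.smul_mem _ _ (Submodule.subset_span ?_)
    exact ⟨i, by simpa using hi, rfl⟩
  have ho : ∀ w ∈ V, inner ℝ (gramSchmidt ℝ r j) w = 0 := by
    intro w hw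
    induction hw using Submodule.span_induction with
    | mem x hx =>
      obtain ⟨i, hi, rfl⟩ := hx
      exact gramSchmidt_orthogonal ℝ r (ne_of_gt hi)
    | zero => simp
    | add x y _ _ hx hy => rw [inner_add_right, hx, hy, add_zero]
    | smul a x _ hx => rw [inner_smul_right, hx, mul_zero]
  apply le_antisymm
  · refine (Metric.infDist_le_dist_of_mem hp).trans ?_
    rw [dist_eq_norm, sub_sub_cancel]
  · rw [Metric.le_infDist ⟨0, V.zero_mem⟩]
    intro w hw
    rw [dist_eq_norm]
    have h0 := ho _ (V.sub_mem hp hw)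
    have h1 := norm_add_sq_eq_norm_sq_add_norm_sq_of_inner_eq_zero _ _ h0
    have h2 : gramSchmidt ℝ r j + (r j - gramSchmidt ℝ r j - w) = r j - w := by abel
    rw [h2] at h1
    refine (sq_le_sq₀ (norm_nonneg _) (norm_nonneg _)).1 ?_
    nlinarith [mul_self_nonneg ‖r j - gramSchmidt ℝ r j - w‖]

/-- Let `m ≤ n` and let `A` be an `m×n` real matrix with rows `r 0, …, r (m-1)`
(viewed as vectors in Euclidean space `ℝⁿ`).  Let `d j` be the Euclidean norm of
the first row when `j = 0`, and the Euclidean distance of row `j` from the linear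
span of the previous rows when `j > 0`.  Then `det(A·Aᵀ) = ∏ j, (d j)²`. -/
theorem det_gram_eq_prod_dist_sq (m n : ℕ) (hmn : m ≤ n)
    (A : Matrix (Fin m) (Fin n) ℝ)
    (r : Fin m → EuclideanSpace ℝ (Fin n)) (hr : ∀ i j, r i j = A i j)
    (d : Fin m → ℝ)
    (hd0 : ∀ j : Fin m, (j : ℕ) = 0 → d j = ‖r j‖)
    (hd : ∀ j : Fin m, 0 < (j : ℕ) →
      d j = Metric.infDist (r j)
        (↑(Submodule.span ℝ (r '' {i | (i : ℕ) < (j : ℕ)})) : Set (EuclideanSpace ℝ (Fin n)))) :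
    (A * Aᵀ).det = ∏ j, (d j) ^ 2 := by
  have hdj : ∀ j, d j = ‖InnerProductSpace.gramSchmidt ℝ r j‖ := by
    intro j
    rw [← gs_infDist r j]
    rcases Nat.eq_zero_or_pos (j : ℕ) with h | h
    · rw [hd0 j h]
      simp [h]
    · exact hd j h
  set g := InnerProductSpace.gramSchmidt ℝ r with hg
  let L : Matrix (Fin m) (Fin m) ℝ := Matrix.of fun i k =>
    if k = i then 1 else if k < i then inner ℝ (g k) (r i) / ‖g k‖ ^ 2 else 0
  have hrL : ∀ i, r i = ∑ k, L i k • g k := by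
    intro i
    have h : r i = g i + ∑ k ∈ Finset.Iio i, (inner ℝ (g k) (r i) / ‖g k‖ ^ 2) • g k :=
      InnerProductSpace.gramSchmidt_def'' ℝ r i
    rw [← Finset.add_sum_erase _ _ (Finset.mem_univ i)]
    have e1 : L i i • g i = g i := by simp [L]
    rw [e1]
    refine h.trans ?_
    congr 1
    have hsub : Finset.Iio i ⊆ Finset.univ.erase i := by
      intro k hk
      simp only [Finset.mem_Iio] at hk
      simp [hk.ne]
    rw [← Finset.sum_subset hsub]
    · refine Finset.sum_congr rfl fun k hk => ?_
      simp only [Finset.mem_Iio] at hk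
      simp [L, hk, hk.ne]
    · intro k hk hk2
      simp only [Finset.mem_Iio] at hk2
      simp only [Finset.mem_erase, Finset.mem_univ, and_true] at hk
      simp [L, hk, hk2]
  have hLdet : L.det = 1 := by
    rw [Matrix.det_of_lowerTriangular L]
    · simp [L]
    · intro i k hik
      have hik' : i < k := hik
      simp [L, hik'.ne', hik'.not_gt]
  have hM : A * Aᵀ = L * Matrix.diagonal (fun k => ‖g k‖ ^ 2) * Lᵀ := by
    ext i j
    have h1 : (A * Aᵀ) i j = inner ℝ (r i) (r j) := by
      simp [Matrix.mul_apply, PiLp.inner_apply, hr, mul_comm]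
    rw [h1, hrL i, hrL j, sum_inner, Matrix.mul_apply]
    refine Finset.sum_congr rfl fun k _ => ?_
    rw [inner_sum, Finset.sum_eq_single k]
    · rw [inner_smul_left, inner_smul_right, real_inner_self_eq_norm_sq, Matrix.mul_diagonal]
      simp only [Matrix.transpose_apply, conj_trivial]
      ring
    · intro l _ hl
      rw [inner_smul_left, inner_smul_right,
        InnerProductSpace.gramSchmidt_orthogonal ℝ r hl.symm]
      simp
    · simp
  rw [hM, Matrix.det_mul, Matrix.det_mul, Matrix.det_transpose, hLdet, Matrix.det_diagonal]
  simp [hdj]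
end

section
/- Let A be a u×n real matrix, let B be a w×n real matrix, and let C be the (u+w)×n matrix obtained by stacking A on top of B (the first u rows of C are the rows of A and the remaining w rows are the rows of B). Then det(C·Cᵀ) ≤ det(A·Aᵀ)·det(B·Bᵀ). -/
open Matrix

/-- `det (1 + P) ≥ 1` for positive semidefinite `P`. -/
lemma one_le_det_one_add {m : ℕ} {P : Matrix (Fin m) (Fin m) ℝ} (hP : P.PosSemidef) :
    1 ≤ (1 + P).det := by
  have h1 : (P.charpoly).eval (-1) = (-1) ^ m * (1 + P).det := by
    rw [Matrix.eval_charpoly]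
    have : (Matrix.scalar (Fin m)) (-1 : ℝ) - P = -(1 + P) := by
      rw [map_neg, map_one]; abel
    rw [this, Matrix.det_neg, Fintype.card_fin]
  have h2 : (P.charpoly).eval (-1) = (-1) ^ m * ∏ i, (1 + hP.1.eigenvalues i) := by
    rw [hP.1.charpoly_eq, Polynomial.eval_prod]
    have : ∀ i, Polynomial.eval (-1 : ℝ)
        (Polynomial.X - Polynomial.C ((hP.1.eigenvalues i : ℝ))) =
        (-1) * (1 + hP.1.eigenvalues i) := by
      intro i; simp; ring
    refine (Finset.prod_congr rfl (fun i _ => this i)).trans ?_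
    rw [Finset.prod_mul_distrib]
    simp
  have h3 : (1 + P).det = ∏ i, (1 + hP.1.eigenvalues i) := by
    refine mul_left_cancel₀ (pow_ne_zero m (by norm_num : (-1 : ℝ) ≠ 0)) (h1.symm.trans h2)
  rw [h3]
  refine le_trans (by simp) (Finset.prod_le_prod (s := Finset.univ) (f := fun _ => (1 : ℝ))
    (fun _ _ => zero_le_one) fun i _ => ?_)
  linarith [hP.eigenvalues_nonneg i]

/-- Monotonicity of the determinant under adding a Gram matrix. -/
lemma det_le_det_add_gram {m n : ℕ} {S : Matrix (Fin m) (Fin m) ℝ} (hS : S.PosSemidef)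
    (Y : Matrix (Fin m) (Fin n) ℝ) : S.det ≤ (S + Y * Yᴴ).det := by
  by_cases h : S.det = 0
  · rw [h]
    exact (hS.add (posSemidef_self_mul_conjTranspose Y)).det_nonneg
  · rw [det_add_mul _ _ (isUnit_iff_ne_zero.mpr h)]
    exact le_mul_of_one_le_right hS.det_nonneg
      (one_le_det_one_add (hS.inv.conjTranspose_mul_mul_same Y))

/-- If `C` is obtained by stacking the real matrix `A` (with `u` rows) on top of the
real matrix `B` (with `w` rows), then `det(C·Cᵀ) ≤ det(A·Aᵀ)·det(B·Bᵀ)`. -/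
theorem det_gram_fromRows_le (u w n : ℕ)
    (A : Matrix (Fin u) (Fin n) ℝ) (B : Matrix (Fin w) (Fin n) ℝ)
    (C : Matrix (Fin u ⊕ Fin w) (Fin n) ℝ) (hC : C = Matrix.fromRows A B) :
    (C * Cᵀ).det ≤ (A * Aᵀ).det * (B * Bᵀ).det := by
  have hA : (A * Aᵀ).PosSemidef := by
    simpa using posSemidef_self_mul_conjTranspose A
  have hCC : (C * Cᵀ).PosSemidef := by
    simpa using posSemidef_self_mul_conjTranspose C
  have hblock : C * Cᵀ = fromBlocks (A * Aᵀ) (A * Bᵀ) (B * Aᵀ) (B * Bᵀ) := by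
    rw [hC, transpose_fromRows, fromRows_mul_fromCols]
  by_cases h : (A * Aᵀ).det = 0
  · rw [h, zero_mul]
    obtain ⟨v, hv, hv0⟩ := exists_vecMul_eq_zero_iff.mpr h
    have hvA : v ᵥ* A = 0 := by
      have := vecMul_self_mul_conjTranspose_eq_zero A v
      rw [conjTranspose_eq_transpose_of_trivial] at this
      exact this.mp hv0
    refine le_of_eq (exists_vecMul_eq_zero_iff.mp ⟨Sum.elim v 0, ?_, ?_⟩)
    · intro h0
      exact hv (funext fun i => congrFun h0 (Sum.inl i))
    · rw [← vecMul_vecMul, hC, sumElim_vecMul_fromRows, hvA]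
      simp
  · have hu : IsUnit (A * Aᵀ).det := isUnit_iff_ne_zero.mpr h
    have hpd : (A * Aᵀ).PosDef := hA.posDef_iff_det_ne_zero.mpr h
    letI := invertibleOfIsUnitDet _ hu
    have hBA : B * Aᵀ = (A * Bᵀ)ᴴ := by
      simp [conjTranspose_eq_transpose_of_trivial]
    have hS : (B * Bᵀ - B * Aᵀ * (A * Aᵀ)⁻¹ * (A * Bᵀ)).PosSemidef := by
      rw [hBA, ← PosDef.fromBlocks₁₁ _ _ hpd, ← hBA, ← hblock]
      exact hCC
    rw [hblock, det_fromBlocks₁₁, invOf_eq_nonsing_inv]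
    refine mul_le_mul_of_nonneg_left ?_ hA.det_nonneg
    have key := det_le_det_add_gram hS (B * Aᵀ * (A * Aᵀ)⁻¹ * A)
    have hY : (B * Aᵀ * (A * Aᵀ)⁻¹ * A) * (B * Aᵀ * (A * Aᵀ)⁻¹ * A)ᴴ
        = B * Aᵀ * (A * Aᵀ)⁻¹ * (A * Bᵀ) := by
      have e : (B * Aᵀ * (A * Aᵀ)⁻¹ * A)ᴴ = Aᵀ * ((A * Aᵀ)⁻¹ * (A * Bᵀ)) := by
        simp [conjTranspose_eq_transpose_of_trivial, transpose_nonsing_inv]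
      rw [e, Matrix.mul_assoc (B * Aᵀ * (A * Aᵀ)⁻¹) A, ← Matrix.mul_assoc A Aᵀ,
        mul_nonsing_inv_cancel_left _ _ hu]
    rwa [hY, sub_add_cancel] at key
end

section
/- Let k ≥ 1 and for i = 1, …, k let A_i be a u_i×n real matrix. Let C be the (u₁+⋯+u_k)×n matrix obtained by stacking A₁, A₂, …, A_k vertically in this order. Then det(C·Cᵀ) ≤ ∏_{i=1}^{k} det(A_i·A_iᵀ). -/
open Matrix

lemma det_le_one_of_trace {m : Type*} [Fintype m] [DecidableEq m] (P : Matrix m m ℝ)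
    (hP : P.PosSemidef) (ht : P.trace = Fintype.card m) : P.det ≤ 1 := by
  have h1 := hP.1.det_eq_prod_eigenvalues
  have h2 := hP.1.trace_eq_sum_eigenvalues
  simp only [RCLike.ofReal_real_eq_id, id] at h1 h2
  rw [h1]
  calc ∏ i, hP.1.eigenvalues i ≤ ∏ i, Real.exp (hP.1.eigenvalues i - 1) := by
        apply Finset.prod_le_prod
        · intro i _
          exact hP.eigenvalues_nonneg i
        · intro i _
          have := Real.add_one_le_exp (hP.1.eigenvalues i - 1)
          linarith
    _ = 1 := by
        rw [← Real.exp_sum, Finset.sum_sub_distrib, ← h2, ht]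
        simp

open scoped MatrixOrder Matrix.Norms.L2Operator in
lemma exists_normalizer {m : Type*} [Fintype m] [DecidableEq m] (P : Matrix m m ℝ)
    (hP : P.PosDef) : ∃ G : Matrix m m ℝ, G * P * Gᵀ = 1 := by
  obtain ⟨B, hB⟩ := CStarAlgebra.nonneg_iff_eq_star_mul_self.mp hP.posSemidef.nonneg
  have hd : IsUnit B.det := by
    have h := hP.det_pos
    rw [hB, det_mul] at h
    exact isUnit_iff_ne_zero.mpr (right_ne_zero_of_mul h.ne')
  have hB' : P = Bᵀ * B := by
    rw [hB, star_eq_conjTranspose, conjTranspose_eq_transpose_of_trivial]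
  refine ⟨(B⁻¹)ᵀ, ?_⟩
  have e : B * B⁻¹ = 1 := mul_nonsing_inv B hd
  calc (B⁻¹)ᵀ * P * ((B⁻¹)ᵀ)ᵀ = (B * B⁻¹)ᵀ * (B * B⁻¹) := by
        rw [hB', transpose_transpose, transpose_mul]; simp only [Matrix.mul_assoc]
    _ = 1 := by rw [e]; simp

lemma gram_psd {m n : Type*} [Fintype m] [Fintype n] (C : Matrix m n ℝ) :
    (C * Cᵀ).PosSemidef := by
  have := posSemidef_self_mul_conjTranspose C
  rwa [conjTranspose_eq_transpose_of_trivial] at this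

lemma det_blockDiag_aux {k : ℕ} {u : Fin k → ℕ}
    (G : ∀ i : Fin k, Matrix (Fin (u i)) (Fin (u i)) ℝ) :
    (blockDiagonal' G).det = ∏ i, (G i).det := by
  rw [(blockTriangular_blockDiagonal' G).det_fintype]
  refine Finset.prod_congr rfl fun i _ => ?_
  rw [← det_submatrix_equiv_self (Equiv.sigmaSubtype i).symm]
  congr 1
  ext a b
  exact blockDiagonal'_apply_eq G i a b

/-- If `C` is obtained by stacking the real matrices `A 1, …, A k` (with `u i` rows each)
vertically, then `det(C·Cᵀ) ≤ ∏ i, det(A i · (A i)ᵀ)`. -/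
theorem det_gram_stack_le (k n : ℕ) (hk : 1 ≤ k) (u : Fin k → ℕ)
    (A : ∀ i : Fin k, Matrix (Fin (u i)) (Fin n) ℝ)
    (C : Matrix ((i : Fin k) × Fin (u i)) (Fin n) ℝ)
    (hC : ∀ (q : (i : Fin k) × Fin (u i)) (j : Fin n), C q j = A q.1 q.2 j) :
    (C * Cᵀ).det ≤ ∏ i, (A i * (A i)ᵀ).det := by
  by_cases h0 : (C * Cᵀ).det = 0
  · rw [h0]
    exact Finset.prod_nonneg fun i _ => (gram_psd (A i)).det_nonneg
  have hpd : (C * Cᵀ).PosDef := (gram_psd C).posDef_iff_det_ne_zero.mpr h0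
  have hA : ∀ i, (A i * (A i)ᵀ).PosDef := by
    intro i
    have h := hpd.submatrix (e := Sigma.mk i) sigma_mk_injective
    convert h using 1
    ext a b
    simp [Matrix.mul_apply, hC]
  choose G hG using fun i => exists_normalizer _ (hA i)
  have hdet : ∀ i, (G i).det * (G i).det * (A i * (A i)ᵀ).det = 1 := by
    intro i
    have h := congrArg Matrix.det (hG i)
    rw [det_mul, det_mul, det_transpose, det_one] at h
    linarith
  set T := blockDiagonal' G with hT
  have hTC : ∀ q j, (T * C) q j = (G q.1 * A q.1) q.2 j := by
    rintro ⟨i, a⟩ j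
    rw [Matrix.mul_apply, Fintype.sum_sigma, Finset.sum_eq_single i]
    · simp [hT, Matrix.mul_apply, hC]
    · intro b _ hb
      apply Finset.sum_eq_zero
      intro c _
      rw [hT, blockDiagonal'_apply_ne _ _ _ hb.symm, zero_mul]
    · simp
  have hle : ((T * C) * (T * C)ᵀ).det ≤ 1 := by
    apply det_le_one_of_trace _ (gram_psd _)
    have : ∀ q, ((T * C) * (T * C)ᵀ) q q = 1 := by
      rintro ⟨i, a⟩
      have h := congrFun (congrFun (hG i) a) a
      have e : G i * (A i * (A i)ᵀ) * (G i)ᵀ = (G i * A i) * (G i * A i)ᵀ := by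
        rw [transpose_mul]; simp only [Matrix.mul_assoc]
      rw [e, Matrix.mul_apply, one_apply_eq] at h
      rw [Matrix.mul_apply, ← h]
      simp only [transpose_apply, hTC]
    simp only [Matrix.trace, diag_apply, this]
    simp
  have e : (T * C) * (T * C)ᵀ = T * (C * Cᵀ) * Tᵀ := by
    rw [transpose_mul]; simp only [Matrix.mul_assoc]
  rw [e, det_mul, det_mul, det_transpose, hT, det_blockDiag_aux] at hle
  have hp : (∏ i, (G i).det) * (∏ i, (G i).det) * ∏ i, (A i * (A i)ᵀ).det = 1 := by
    rw [← Finset.prod_mul_distrib, ← Finset.prod_mul_distrib]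
    exact Finset.prod_eq_one fun i _ => hdet i
  have hpos : 0 < (∏ i, (G i).det) * (∏ i, (G i).det) := by
    apply lt_of_le_of_ne (mul_self_nonneg _)
    intro h
    rw [← h, zero_mul] at hp
    exact zero_ne_one hp
  refine le_of_mul_le_mul_left ?_ hpos
  rw [hp]
  linarith
end

section
/- Let p ≥ 5 be a prime, let m ≥ 1, and let a₁, …, a_m ∈ 𝔽_p be nonzero elements with a_i ≠ a_j and a_i ≠ −a_j for all i ≠ j. Let M be an m×m matrix with integer entries such that every row i of M satisfies one of the following: (type 1) M_{ii} = 3, there is exactly one index j ≠ i with M_{ij} ∈ {1, −1}, and all other entries of row i are 0; or (type 2) M_{ii} = 2, there are at most two indices j ≠ i with M_{ij} ∈ {1, −1}, and all other entries of row i are 0. Suppose that ∑_{j=1}^{m} M_{ij}·a_j = 0 in 𝔽_p for every i = 1, …, m. Let r be the rank of M as a matrix over ℚ. Then every r×r minor of M (the determinant of any r×r submatrix of M obtained by choosing r rows and r columns) is divisible by p. -/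
open Matrix

/-- The combinatorial core: an integer kernel vector whose entries at distinct indices
have distinct absolute values must vanish. -/
lemma no_kernel_vector (m : ℕ) (hm : 1 ≤ m)
    (M : Matrix (Fin m) (Fin m) ℤ)
    (hrow : ∀ i : Fin m,
      (M i i = 3 ∧ ∃ j, j ≠ i ∧ (M i j = 1 ∨ M i j = -1) ∧
        ∀ k, k ≠ i → k ≠ j → M i k = 0) ∨
      (M i i = 2 ∧ (∀ k, k ≠ i → M i k = 0 ∨ M i k = 1 ∨ M i k = -1) ∧
        ∃ j₁ j₂, j₁ ≠ i ∧ j₂ ≠ i ∧ ∀ k, k ≠ i → k ≠ j₁ → k ≠ j₂ → M i k = 0))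
    (x : Fin m → ℤ) (hx0 : ∀ i, x i ≠ 0)
    (hx : ∀ i j, i ≠ j → x i ≠ x j ∧ x i ≠ -x j)
    (hM : ∀ i, ∑ j, M i j * x j = 0) : False := by
  have : Nonempty (Fin m) := ⟨⟨0, hm⟩⟩
  obtain ⟨i, hi⟩ := Finite.exists_max (fun i => |x i|)
  have h0 := hx0 i
  have hs := hM i
  have two : ∀ j, j ≠ i → (∀ k, k ≠ i → k ≠ j → M i k = 0) →
      M i i * x i + M i j * x j = 0 := by
    intro j hj hk
    rw [← hs, ← Finset.sum_subset (Finset.subset_univ {i, j}), Finset.sum_pair hj.symm]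
    intro k _ hk'
    simp only [Finset.mem_insert, Finset.mem_singleton, not_or] at hk'
    rw [hk k hk'.1 hk'.2, zero_mul]
  rcases hrow i with ⟨h3, j, hj, hc, hk⟩ | ⟨h2, hc, j, l, hj, hl, hk⟩
  · have h := two j hj hk
    have hb := hi j
    rw [h3] at h
    rcases hc with hc | hc <;> rw [hc] at h <;> grind
  · by_cases hjl : j = l
    · subst hjl
      have h := two j hj (fun k h1 h2 => hk k h1 h2 h2)
      have hb := hi j
      rw [h2] at h
      rcases hc j hj with hc | hc | hc <;> rw [hc] at h <;> grind
    · have h : M i i * x i + (M i j * x j + M i l * x l) = 0 := by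
        rw [← hs, ← Finset.sum_subset (Finset.subset_univ {i, j, l}),
          Finset.sum_insert (by simp [hj.symm, hl.symm]), Finset.sum_pair hjl]
        intro k _ hk'
        simp only [Finset.mem_insert, Finset.mem_singleton, not_or] at hk'
        rw [hk k hk'.1 hk'.2.1 hk'.2.2, zero_mul]
      have hb := hi j
      have hb' := hi l
      have hd := hx i j hj.symm
      have hd' := hx i l hl.symm
      rw [h2] at h
      rcases hc j hj with hc1 | hc1 | hc1 <;> rcases hc l hl with hc2 | hc2 | hc2 <;>
        rw [hc1, hc2] at h <;> grind

/-- If `r` rows of a rational matrix of rank `r` have a nonzero `r×r` minor, then a vector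
killed by these rows is killed by the whole matrix. -/
lemma ker_of_rows {m r : ℕ} (A : Matrix (Fin m) (Fin m) ℚ) (hr : r = A.rank)
    (f g : Fin r → Fin m) (hd : (A.submatrix f g).det ≠ 0)
    (w : Fin m → ℚ) (hw : ∀ k, (A *ᵥ w) (f k) = 0) : A *ᵥ w = 0 := by
  have h1 : (A.submatrix f id).rank = r := by
    apply le_antisymm
    · simpa using rank_le_card_height (A.submatrix f id)
    · have h := rank_of_det_ne_zero hd
      have h' := rank_submatrix_le (A.submatrix f id) (id : Fin r → Fin r) g
      rw [submatrix_submatrix] at h'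
      simp only [Fintype.card_fin] at h
      simpa [h] using h'
  have hle : LinearMap.ker A.mulVecLin ≤ LinearMap.ker (A.submatrix f id).mulVecLin := by
    intro v hv
    simp only [LinearMap.mem_ker, mulVecLin_apply] at hv ⊢
    ext k
    exact congrFun hv (f k)
  have e1 := LinearMap.finrank_range_add_finrank_ker A.mulVecLin
  have e2 := LinearMap.finrank_range_add_finrank_ker (A.submatrix f id).mulVecLin
  change A.rank + _ = _ at e1
  change (A.submatrix f id).rank + _ = _ at e2
  have heq := Submodule.eq_of_le_of_finrank_eq hle (by omega)
  have : w ∈ LinearMap.ker A.mulVecLin := by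
    rw [heq]
    simp only [LinearMap.mem_ker, mulVecLin_apply]
    ext k
    exact hw k
  simpa using this

/-- Smith-Normal-Form divisibility theorem: if the rows of the integer matrix `M` are
coefficient vectors of type-1 equations (`3x_i ± x_j = 0`) or type-2 equations
(`2x_i ± x_j (± x_k) = 0`), and `a₁, …, a_m` are nonzero elements of `𝔽_p`, pairwise
distinct up to sign, satisfying `M·a = 0` over `𝔽_p`, then every `r×r` minor of `M`
is divisible by `p`, where `r` is the rank of `M` over `ℚ`. -/
theorem minor_divisible_by_p (p : ℕ) (hp : p.Prime) (hp5 : 5 ≤ p)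
    (m : ℕ) (hm : 1 ≤ m)
    (a : Fin m → ZMod p) (ha0 : ∀ i, a i ≠ 0)
    (ha : ∀ i j, i ≠ j → a i ≠ a j ∧ a i ≠ -a j)
    (M : Matrix (Fin m) (Fin m) ℤ)
    (hrow : ∀ i : Fin m,
      (M i i = 3 ∧ ∃ j, j ≠ i ∧ (M i j = 1 ∨ M i j = -1) ∧
        ∀ k, k ≠ i → k ≠ j → M i k = 0) ∨
      (M i i = 2 ∧ (∀ k, k ≠ i → M i k = 0 ∨ M i k = 1 ∨ M i k = -1) ∧
        ∃ j₁ j₂, j₁ ≠ i ∧ j₂ ≠ i ∧ ∀ k, k ≠ i → k ≠ j₁ → k ≠ j₂ → M i k = 0))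
    (hEq : ∀ i : Fin m, ∑ j, (M i j : ZMod p) * a j = 0)
    (r : ℕ) (hr : r = (M.map (fun x => (x : ℚ))).rank)
    (f g : Fin r → Fin m) (hf : Function.Injective f) (hg : Function.Injective g) :
    (p : ℤ) ∣ (M.submatrix f g).det := by
  have : Fact p.Prime := ⟨hp⟩
  by_contra hD
  set N := M.submatrix f g with hN
  have hDp : ((N.det : ℤ) : ZMod p) ≠ 0 := by
    rwa [Ne, ZMod.intCast_zmod_eq_zero_iff_dvd]
  choose b hb using fun i => ZMod.intCast_surjective (a i)
  have hdvd : ∀ i, ∃ c, (M *ᵥ b) i = p * c := by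
    intro i
    have : (p : ℤ) ∣ (M *ᵥ b) i := by
      rw [← ZMod.intCast_zmod_eq_zero_iff_dvd, ← hEq i]
      simp [mulVec, dotProduct, hb]
    exact this
  choose v hv using hdvd
  -- solve on the chosen rows via the adjugate
  set z : Fin r → ℤ := N.adjugate *ᵥ (fun k => v (f k)) with hz
  have hNz : ∀ k, (N *ᵥ z) k = N.det * v (f k) := by
    intro k
    rw [hz, mulVec_mulVec, mul_adjugate, smul_mulVec, one_mulVec]
    rfl
  set y : Fin m → ℤ := fun j => ∑ k, if g k = j then z k else 0 with hy
  have hMy : ∀ k, (M *ᵥ y) (f k) = N.det * v (f k) := by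
    intro k
    rw [← hNz k]
    simp only [mulVec, dotProduct, hy, Finset.mul_sum]
    rw [Finset.sum_comm]
    simp [hN]
  set x : Fin m → ℤ := fun j => N.det * b j - p * y j with hx
  have hMx' : ∀ i, (M *ᵥ x) i = N.det * (M *ᵥ b) i - p * (M *ᵥ y) i := by
    intro i
    simp only [mulVec, dotProduct, hx, Finset.mul_sum, ← Finset.sum_sub_distrib]
    exact Finset.sum_congr rfl fun j _ => by ring
  have hxz : ∀ k, (M *ᵥ x) (f k) = 0 := by
    intro k
    rw [hMx', hMy, hv]
    ring
  have hcast : ∀ i, ((M.map (fun x => (x : ℚ))) *ᵥ (fun j => (x j : ℚ))) i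
      = (((M *ᵥ x) i : ℤ) : ℚ) := by
    intro i
    simp [mulVec, dotProduct]
  have hdet : ((M.map (fun x => (x : ℚ))).submatrix f g).det ≠ 0 := by
    have h : ((M.map (fun x => (x : ℚ))).submatrix f g).det = (N.det : ℚ) := by
      rw [Int.cast_det]
      rfl
    rw [h]
    intro h0
    apply hDp
    have : N.det = 0 := by exact_mod_cast h0
    simp [this]
  have hker := ker_of_rows _ hr f g hdet (fun j => (x j : ℚ)) (by
    intro k
    rw [hcast, hxz]
    simp)
  have hxp : ∀ i, ((x i : ℤ) : ZMod p) = (N.det : ZMod p) * a i := by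
    intro i
    simp [hx, hb]
  refine no_kernel_vector m hm M hrow x ?_ ?_ ?_
  · intro i h
    have := hxp i
    rw [h, Int.cast_zero] at this
    exact mul_ne_zero hDp (ha0 i) this.symm
  · intro i j hij
    constructor
    · intro h
      have := hxp i
      rw [h, hxp j] at this
      exact (ha i j hij).1 (mul_left_cancel₀ hDp this).symm
    · intro h
      have := hxp i
      rw [h, Int.cast_neg, hxp j, ← mul_neg] at this
      exact (ha i j hij).2 (mul_left_cancel₀ hDp this).symm
  · intro i
    have h := congrFun hker i
    rw [hcast, Pi.zero_apply, Int.cast_eq_zero] at h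
    exact h
end

section
/- Let p be a prime, let m ≥ 1 with 3^m ≤ p, and let a₁, …, a_m ∈ 𝔽_p be nonzero elements with a_i ≠ a_j and a_i ≠ −a_j for all i ≠ j. Let I ⊆ {1, …, m}, let σ : I → {1, …, m}, and let ε : I → {1, −1} be such that 3·a_i + ε(i)·a_{σ(i)} = 0 in 𝔽_p for every i ∈ I. Then the directed graph on {1, …, m} with edge set {(i, σ(i)) : i ∈ I} contains no directed cycle; that is, there exist no k ≥ 1 and pairwise distinct v₁, …, v_k ∈ I with σ(v_j) = v_{j+1} for j = 1, …, k−1 and σ(v_k) = v₁. -/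
/-- The directed graph with edges `(i, σ(i))`, `i ∈ I`, arising from type-1 equations
`3a_i + ε(i)·a_{σ(i)} = 0` over `𝔽_p` (with `3^m ≤ p`, the `a_i` nonzero and pairwise
distinct up to sign) contains no directed cycle. -/
theorem type_one_graph_acyclic (p : ℕ) (hp : p.Prime)
    (m : ℕ) (hm : 1 ≤ m) (hpm : 3 ^ m ≤ p)
    (a : Fin m → ZMod p) (ha0 : ∀ i, a i ≠ 0)
    (ha : ∀ i j, i ≠ j → a i ≠ a j ∧ a i ≠ -a j)
    (I : Set (Fin m)) (σ : Fin m → Fin m) (ε : Fin m → ℤ)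
    (hε : ∀ i ∈ I, ε i = 1 ∨ ε i = -1)
    (heq : ∀ i ∈ I, 3 * a i + (ε i : ZMod p) * a (σ i) = 0) :
    ¬ ∃ (k : ℕ) (v : ℕ → Fin m), 1 ≤ k ∧
        (∀ i < k, v i ∈ I) ∧
        (∀ i < k, ∀ j < k, v i = v j → i = j) ∧
        (∀ j, j + 1 < k → σ (v j) = v (j + 1)) ∧
        σ (v (k - 1)) = v 0 := by
  rintro ⟨k, v, hk, hI, hinj, hstep, hlast⟩
  haveI := Fact.mk hp
  have hkm : k ≤ m := by
    have h := Fintype.card_le_of_injective (fun i : Fin k => v i)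
      (fun i j h => Fin.ext (hinj i i.2 j j.2 h))
    simpa using h
  have step : ∀ i ∈ I, a (σ i) = 3 * a i ∨ a (σ i) = -(3 * a i) := by
    intro i hi
    have h := heq i hi
    rcases hε i hi with e | e <;> rw [e] at h <;> push_cast at h
    · right; linear_combination h
    · left; linear_combination -h
  have key : ∀ j, j < k → a (v j) = 3 ^ j * a (v 0) ∨ a (v j) = -(3 ^ j * a (v 0)) := by
    intro j
    induction j with
    | zero => intro _; left; simp
    | succ j ih =>
      intro hj
      have h1 := step (v j) (hI j (by omega))
      rw [hstep j hj] at h1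
      rcases ih (by omega) with h | h <;> rcases h1 with h1 | h1 <;> rw [h1, h]
      · left; ring
      · right; ring
      · right; ring
      · left; ring
  obtain ⟨n, rfl⟩ : ∃ n, k = n + 1 := ⟨k - 1, by omega⟩
  have h1 := step (v n) (hI n (by omega))
  rw [Nat.add_sub_cancel] at hlast
  rw [hlast] at h1
  have h0 := ha0 (v 0)
  have fin : ((3 : ZMod p) ^ (n + 1) - 1 = 0) ∨ ((3 : ZMod p) ^ (n + 1) + 1 = 0) := by
    rcases key n (by omega) with h | h <;> rcases h1 with h1 | h1 <;> rw [h] at h1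
    · left; apply (mul_eq_zero.mp _).resolve_right h0; linear_combination -h1
    · right; apply (mul_eq_zero.mp _).resolve_right h0; linear_combination h1
    · right; apply (mul_eq_zero.mp _).resolve_right h0; linear_combination h1
    · left; apply (mul_eq_zero.mp _).resolve_right h0; linear_combination -h1
  have hle : 3 ^ (n + 1) ≤ 3 ^ m := Nat.pow_le_pow_right (by norm_num) hkm
  have h3 : 3 ≤ 3 ^ (n + 1) := by
    rw [pow_succ]; have := Nat.one_le_pow n 3 (by norm_num); omega
  have hodd : Odd (3 ^ (n + 1)) := Odd.pow (by decide)
  have hpodd : Odd p := hp.odd_of_ne_two (by omega)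
  rcases fin with h | h
  · have hd : p ∣ 3 ^ (n + 1) - 1 := by
      rw [← ZMod.natCast_eq_zero_iff, Nat.cast_sub (by omega)]
      push_cast; exact h
    have := Nat.le_of_dvd (by omega) hd
    omega
  · have hd : p ∣ 3 ^ (n + 1) + 1 := by
      rw [← ZMod.natCast_eq_zero_iff]
      push_cast; exact h
    have h2 : 2 ∣ 3 ^ (n + 1) + 1 := (hodd.add_odd odd_one).two_dvd
    have hc : Nat.Coprime 2 p := (Nat.coprime_two_left).mpr hpodd
    have := Nat.le_of_dvd (by omega) (hc.mul_dvd_of_dvd_of_dvd h2 hd)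
    omega
end

section
/- Let v, m be positive integers with v + 1 ≤ m and let δ₁, …, δ_v ∈ {1, −1}. Let B be the v×m real matrix whose i-th row (for 1 ≤ i ≤ v) has entry 3 in column i, entry δ_i in column i+1, and all other entries 0. Then det(B·Bᵀ) = (9^{v+1} − 1)/8. -/
open Matrix

/-- Tridiagonal Gram matrix. -/
def triGram (n : ℕ) (d : ℕ → ℝ) : Matrix (Fin n) (Fin n) ℝ := fun i j =>
  if (i : ℕ) = j then 10 else if (j : ℕ) = i + 1 then 3 * d i
    else if (i : ℕ) = j + 1 then 3 * d j else 0

lemma triGram_rec (n : ℕ) (d : ℕ → ℝ) :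
    (triGram (n + 2) d).det = 10 * (triGram (n + 1) (fun i => d (i + 1))).det
      - 9 * d 0 ^ 2 * (triGram n (fun i => d (i + 2))).det := by
  have h1 : (triGram (n + 2) d).submatrix Fin.succ (Fin.succAbove 0)
      = triGram (n + 1) (fun i => d (i + 1)) := by
    ext i j
    simp [triGram]
  have h2 : ((triGram (n + 2) d).submatrix Fin.succ (Fin.succAbove (Fin.succ 0))).det
      = 3 * d 0 * (triGram n (fun i => d (i + 2))).det := by
    rw [det_succ_column_zero, Fin.sum_univ_succ, Finset.sum_eq_zero]
    · have h3 : ((triGram (n + 2) d).submatrix Fin.succ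
          (Fin.succAbove (Fin.succ 0))).submatrix (Fin.succAbove 0) Fin.succ
          = triGram n (fun i => d (i + 2)) := by
        ext i j
        simp [triGram]
      rw [h3]
      simp [triGram]
    · intro i _
      simp [triGram]
  rw [det_succ_row_zero, Fin.sum_univ_succ, Fin.sum_univ_succ, Finset.sum_eq_zero, h1, h2]
  · simp [triGram]
    ring
  · intro i _
    simp [triGram]

lemma triGram_det (n : ℕ) : ∀ d : ℕ → ℝ, (∀ i, d i ^ 2 = 1) →
    (triGram n d).det = ((9 : ℝ) ^ (n + 1) - 1) / 8 := by
  induction n using Nat.twoStepInduction with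
  | zero => intro d _; norm_num
  | one => intro d _; norm_num [triGram]
  | more n ih1 ih2 =>
    intro d hd
    rw [triGram_rec, ih2 _ (fun i => hd _), ih1 _ (fun i => hd _), hd]
    ring

/-- If `B` is the `v×m` coefficient matrix of a chain of type-1 equations
`3x_i ± x_{i+1} = 0`, `i = 1, …, v` (a directed path), then
`det(B·Bᵀ) = (9^{v+1} − 1)/8`. -/
theorem det_gram_type_one_path (v m : ℕ) (hv : 1 ≤ v) (hm : v + 1 ≤ m)
    (δ : Fin v → ℝ) (hδ : ∀ i, δ i = 1 ∨ δ i = -1)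
    (B : Matrix (Fin v) (Fin m) ℝ)
    (hB : ∀ (i : Fin v) (j : Fin m),
      B i j = if (j : ℕ) = (i : ℕ) then 3
        else if (j : ℕ) = (i : ℕ) + 1 then δ i else 0) :
    (B * Bᵀ).det = ((9 : ℝ) ^ (v + 1) - 1) / 8 := by
  have hBB : B * Bᵀ = triGram v (fun i => if h : i < v then δ ⟨i, h⟩ else 1) := by
    ext i k
    have hB' : ∀ (i : Fin v) (j : Fin m), B i j =
        (if j = (⟨i, by omega⟩ : Fin m) then 3 else 0)
        + (if j = (⟨i + 1, by omega⟩ : Fin m) then δ i else 0) := by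
      intro i j
      rw [hB]
      simp only [Fin.ext_iff]
      split_ifs <;> first | omega | simp
    have hsq : δ i * δ i = 1 := by rcases hδ i with h | h <;> rw [h] <;> norm_num
    simp only [Matrix.mul_apply, Matrix.transpose_apply]
    simp only [hB' i, add_mul, ite_mul, zero_mul, Finset.sum_add_distrib,
      Finset.sum_ite_eq', Finset.sum_ite_eq, Finset.mem_univ, if_true, hB, triGram]
    by_cases h1 : (i : ℕ) = k
    · have : i = k := Fin.ext h1
      subst this
      simp [hsq]
      norm_num
    · by_cases h2 : (k : ℕ) = i + 1
      · simp [h2, mul_comm]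
        intros; omega
      · by_cases h3 : (i : ℕ) = k + 1
        · simp [h3, mul_comm]
          rw [if_neg (by omega), if_neg (by omega), add_zero]
        · have h4 : ¬ ((i : ℕ) + 1 = k) := by omega
          simp [h1, h2, h3, h4]
  rw [hBB]
  apply triGram_det
  intro i
  split_ifs with h
  · rcases hδ ⟨i, h⟩ with h | h <;> rw [h] <;> norm_num
  · norm_num
end

section
/- Let m, t ≥ 1 and let v₁, …, v_t ≥ 1 be integers with v = v₁ + ⋯ + v_t. For each j = 1, …, t let π_j : {1, …, v_j + 1} → {1, …, m} be injective, and suppose the images of π₁, …, π_t are pairwise disjoint. For each j and each 1 ≤ i ≤ v_j let δ_{j,i} ∈ {1, −1}. Let B be the v×m real matrix whose rows are indexed by pairs (j,i) with 1 ≤ j ≤ t and 1 ≤ i ≤ v_j, where row (j,i) has entry 3 in column π_j(i), entry δ_{j,i} in column π_j(i+1), and all other entries 0. Then det(B·Bᵀ) < 11^t · 9^{v−t}. -/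
open Matrix

lemma tri_step (n : ℕ) : (((9:ℝ)^(n+3)-1)/(9^(n+2)-1)) = 10 - 9 / (((9:ℝ)^(n+2)-1)/(9^(n+1)-1)) := by
  have h1 : (9:ℝ)^(n+1) - 1 ≠ 0 := by
    have : (1:ℝ) < 9^(n+1) := one_lt_pow₀ (by norm_num) (by omega)
    linarith
  have h2 : (9:ℝ)^(n+2) - 1 ≠ 0 := by
    have : (1:ℝ) < 9^(n+2) := one_lt_pow₀ (by norm_num) (by omega)
    linarith
  field_simp
  ring

lemma tri_prod (n : ℕ) : ∏ i ∈ Finset.range n, (((9:ℝ)^(i+2)-1)/(9^(i+1)-1)) = (9^(n+1)-1)/8 := by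
  induction n with
  | zero => norm_num
  | succ n ih =>
    rw [Finset.prod_range_succ, ih]
    have h1 : (9:ℝ)^(n+1) - 1 ≠ 0 := by
      have : (1:ℝ) < 9^(n+1) := one_lt_pow₀ (by norm_num) (by omega)
      linarith
    field_simp

lemma tri_det (n : ℕ) (e : ℕ → ℝ) (he : ∀ i, e i * e i = 1) (A : Matrix (Fin n) (Fin n) ℝ)
    (hA : ∀ i j : Fin n, A i j = if i = j then 10 else if (i:ℕ)+1 = j then 3 * e i
      else if (j:ℕ)+1 = i then 3 * e j else 0) : A.det = (9^(n+1)-1)/8 := by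
  set d : ℕ → ℝ := fun i => ((9:ℝ)^(i+2)-1)/(9^(i+1)-1) with hd
  have hd0 : ∀ i, d i ≠ 0 := by
    intro i
    have h1 : (1:ℝ) < 9^(i+1) := one_lt_pow₀ (by norm_num) (by omega)
    have h2 : (1:ℝ) < 9^(i+2) := one_lt_pow₀ (by norm_num) (by omega)
    exact div_ne_zero (by linarith) (by linarith)
  have hds : ∀ i, d (i+1) = 10 - 9 / d i := fun i => tri_step i
  have hdz : d 0 = 10 := by norm_num [hd]
  let l : ℕ → ℕ → ℝ := fun i k => (if k = i then 1 else 0) + (if k + 1 = i then 3 * e k / d k else 0)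
  let u : ℕ → ℕ → ℝ := fun k j => (if k = j then d k else 0) + (if k + 1 = j then 3 * e k else 0)
  let L : Matrix (Fin n) (Fin n) ℝ := fun i k => l i k
  let U : Matrix (Fin n) (Fin n) ℝ := fun k j => u k j
  have hLU : A = L * U := by
    ext i j
    rw [Matrix.mul_apply, hA]
    have : ∑ k : Fin n, L i k * U k j = ∑ k ∈ Finset.range n, l i k * u k j :=
      Fin.sum_univ_eq_sum_range (fun k => l i k * u k j) n
    rw [this]
    obtain ⟨i, hi⟩ := i
    obtain ⟨j, hj⟩ := j
    simp only [l, add_mul, Finset.sum_add_distrib, ite_mul, one_mul, zero_mul, Finset.sum_ite_eq',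
      Finset.mem_range, hi, if_true, Fin.mk.injEq]
    cases i with
    | zero => 
      simp [u, hdz]
      grind
    | succ i =>
      have hi' : i < n := by omega
      simp only [add_left_inj, Finset.sum_ite_eq', Finset.mem_range, hi', if_true, u, hds]
      have h0 := hd0 i
      have h1 := he i
      by_cases c1 : i + 1 = j
      · subst c1
        simp
        field_simp
        linear_combination (-9) * h1
      by_cases c2 : i = j
      · subst c2
        have c5 : ¬ (i + 1 + 1 = i) := by omega
        simp [c5]
        field_simp
      by_cases c3 : i + 1 + 1 = j
      · subst c3
        have c5 : ¬ (i = i + 1 + 1) := by omega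
        simp [c5]
      have c4 : ¬ (j = i) := fun h => c2 h.symm
      simp [c1, c2, c3, c4]
  have hL : L.det = 1 := by
    rw [Matrix.det_of_isLowerTriangular]
    · simp [L, l]
    · intro i j hij
      have : (i:ℕ) < j := hij
      simp only [L, l]
      rw [if_neg (by omega), if_neg (by omega), add_zero]
  have hU : U.det = ∏ i ∈ Finset.range n, d i := by
    rw [Matrix.det_of_isUpperTriangular]
    · rw [← Fin.prod_univ_eq_prod_range]
      simp [U, u]
    · intro i j hij
      have : (j:ℕ) < i := hij
      simp only [U, u]
      rw [if_neg (by omega), if_neg (by omega), add_zero]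
  rw [hLU, Matrix.det_mul, hL, hU, one_mul]
  exact tri_prod n



/-- If the rows of `B` are the coefficient vectors of type-1 equations `3x_a ± x_b = 0`
whose associated edges decompose into `t` pairwise vertex-disjoint directed paths of
lengths `v 1, …, v t`, then `det(B·Bᵀ) < 11^t · 9^{v − t}` where `v = v 1 + ⋯ + v t`. -/
theorem det_gram_type_one_paths_lt (m t : ℕ) (hm : 1 ≤ m) (ht : 1 ≤ t)
    (v : Fin t → ℕ) (hv : ∀ j, 1 ≤ v j)
    (π : ∀ j : Fin t, Fin (v j + 1) → Fin m)
    (hπ : ∀ j, Function.Injective (π j))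
    (hdisj : ∀ j k, j ≠ k → ∀ (x : Fin (v j + 1)) (y : Fin (v k + 1)), π j x ≠ π k y)
    (δ : ∀ j : Fin t, Fin (v j) → ℝ)
    (hδ : ∀ j i, δ j i = 1 ∨ δ j i = -1)
    (B : Matrix ((j : Fin t) × Fin (v j)) (Fin m) ℝ)
    (hB : ∀ (q : (j : Fin t) × Fin (v j)) (c : Fin m),
      B q c = if c = π q.1 q.2.castSucc then 3
        else if c = π q.1 q.2.succ then δ q.1 q.2 else 0) :
    (B * Bᵀ).det < (11 : ℝ) ^ t * (9 : ℝ) ^ ((∑ j, v j) - t) := by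
  have hB' : ∀ (q : (j : Fin t) × Fin (v j)) (c : Fin m),
      B q c = (if c = π q.1 q.2.castSucc then 3 else 0)
        + (if c = π q.1 q.2.succ then δ q.1 q.2 else 0) := by
    intro q c
    have hne : π q.1 q.2.castSucc ≠ π q.1 q.2.succ := by
      intro h
      have := congrArg Fin.val (hπ _ h)
      simp at this
    rw [hB]
    split_ifs with h1 h2 <;> simp_all
  have hG : ∀ p q, (B * Bᵀ) p q =
      (if π p.1 p.2.castSucc = π q.1 q.2.castSucc then 9 else 0)
      + (if π p.1 p.2.castSucc = π q.1 q.2.succ then 3 * δ q.1 q.2 else 0)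
      + (if π p.1 p.2.succ = π q.1 q.2.castSucc then 3 * δ p.1 p.2 else 0)
      + (if π p.1 p.2.succ = π q.1 q.2.succ then δ p.1 p.2 * δ q.1 q.2 else 0) := by
    intro p q
    simp only [Matrix.mul_apply, Matrix.transpose_apply, hB', add_mul, Finset.sum_add_distrib,
      ite_mul, zero_mul, Finset.sum_ite_eq', Finset.mem_univ, if_true, mul_add,
      mul_ite, mul_zero]
    norm_num
    ring_nf
    simp only [@eq_comm _ (π q.1 q.2.castSucc), @eq_comm _ (π q.1 q.2.succ)]
    ring
  have htri : (B * Bᵀ).BlockTriangular Sigma.fst := by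
    intro p q hpq
    have hne : p.1 ≠ q.1 := ne_of_gt hpq
    rw [hG]
    simp [hdisj _ _ hne]
  have hdet : ∀ k, ((B * Bᵀ).toSquareBlock Sigma.fst k).det = (9^(v k+1)-1)/8 := by
    intro k
    let f : Fin (v k) ≃ {a : (j : Fin t) × Fin (v j) // a.1 = k} :=
      Equiv.ofBijective (fun i => ⟨⟨k, i⟩, rfl⟩) (by
        constructor
        · intro a b h
          simpa using h
        · rintro ⟨⟨j, i⟩, h⟩
          dsimp at h
          subst h
          exact ⟨i, rfl⟩)
    rw [← Matrix.det_submatrix_equiv_self f]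
    apply tri_det (v k) (fun i => if h : i < v k then δ k ⟨i, h⟩ else 1)
    · intro i
      split_ifs with h
      · rcases hδ k ⟨i, h⟩ with h | h <;> rw [h] <;> norm_num
      · norm_num
    · intro i j
      have : ((B * Bᵀ).toSquareBlock Sigma.fst k).submatrix f f i j = (B * Bᵀ) ⟨k, i⟩ ⟨k, j⟩ := rfl
      rw [this, hG]
      simp only [(hπ k).eq_iff, Fin.ext_iff, Fin.val_castSucc, Fin.val_succ, Fin.is_lt, dif_pos,
        Fin.eta, add_left_inj]
      by_cases c1 : (i:ℕ) = j
      · have : i = j := Fin.ext c1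
        subst this
        rcases hδ k i with h | h <;> simp [h] <;> norm_num
      by_cases c2 : (i:ℕ) + 1 = j
      · have c3 : ¬ ((i:ℕ) = j + 1) := by omega
        simp [c1, c2, c3]
      by_cases c3 : (j:ℕ) + 1 = i
      · simp [c1, c2, c3]
      · have c4 : ¬ ((i:ℕ) = j + 1) := by omega
        simp [c1, c2, c3, c4]
  rw [htri.det_fintype]
  simp only [hdet]
  have hlt : ∀ k, ((9:ℝ)^(v k+1)-1)/8 < 11 * 9^(v k - 1) := by
    intro k
    obtain ⟨w, hw⟩ := Nat.exists_eq_add_of_le' (hv k)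
    rw [hw, Nat.add_sub_cancel]
    have : (0:ℝ) < 9^w := by positivity
    ring_nf
    linarith
  have hpos : ∀ k, 0 < ((9:ℝ)^(v k+1)-1)/8 := by
    intro k
    have : (1:ℝ) < 9^(v k+1) := one_lt_pow₀ (by norm_num) (by omega)
    linarith
  have hsum : (∑ j, v j) - t = ∑ j, (v j - 1) := by
    have : ∑ j, v j = ∑ j, (v j - 1) + t := by
      calc ∑ j, v j = ∑ j, ((v j - 1) + 1) :=
            Finset.sum_congr rfl fun j _ => (Nat.sub_add_cancel (hv j)).symm
        _ = _ := by simp [Finset.sum_add_distrib]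
    omega
  have hne : (Finset.univ : Finset (Fin t)).Nonempty := ⟨⟨0, ht⟩, Finset.mem_univ _⟩
  calc ∏ k, ((9:ℝ)^(v k+1)-1)/8 < ∏ k, (11 * 9^(v k - 1)) :=
        Finset.prod_lt_prod_of_nonempty (fun k _ => hpos k) (fun k _ => hlt k) hne
    _ = _ := by
        rw [Finset.prod_mul_distrib, Finset.prod_pow_eq_pow_sum, hsum]
        simp
end
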